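/- arXiv:gr-qc/0609074 — 3 statements merged into one kernel-verified Lean document; each statement's English description precedes it below -/
import Mathlib

section
/- Let φ: (0,1) → [0,∞) be continuous and asymptotically polytropic, i.e., there exist constants φ₋ > 0 and n > 1/2 such that φ(ℰ) = φ₋(1−ℰ)^{n−3/2}·(1 + o(1)) as ℰ → 1⁻. Then for every real i > −1 there exists a constant c_i > 0 such that g_i(η) = c_i·η^{i+n−1/2}·(1 + o(1)) as η → 0⁺, where g_i(η) = ∫_{e^{−η}}^{1} φ(ℰ)·[(ℰ² − e^{−2η})/2]^i dℰ. Moreover, for i > 0 the derivative satisfies g_i'(η) = i·e^{−2η}·g_{i−1}(η) = i·c_{i−1}·η^{i+n−3/2}·(1 + o(1)) as η → 0⁺. -/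
open Filter Set

/-- The kinetic integrals `g_i(η) = ∫_{e^{-η}}^1 φ(ℰ) [(ℰ² - e^{-2η})/2]^i dℰ`. -/
noncomputable def gfun (φ : ℝ → ℝ) (i η : ℝ) : ℝ :=
  ∫ E in Real.exp (-η)..1, φ E * (((E ^ 2 - Real.exp (-2 * η)) / 2) ^ i)

open MeasureTheory in
lemma aux_w (p i : ℝ) (hp : -1 < p) (hi : -1 < i) :
    IntervalIntegrable (fun t : ℝ => (1 - t) ^ p * t ^ i) volume 0 1 := by
  have h := Complex.betaIntegral_convergent (u := ((i + 1 : ℝ) : ℂ)) (v := ((p + 1 : ℝ) : ℂ))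
    (by rw [Complex.ofReal_re]; linarith) (by rw [Complex.ofReal_re]; linarith)
  rw [intervalIntegrable_iff_integrableOn_Ioc_of_le zero_le_one] at h ⊢
  refine (IntegrableOn.congr_fun h.norm ?_ measurableSet_Ioc)
  intro x hx
  have h1 : (x:ℂ) ^ (((i + 1 : ℝ) : ℂ) - 1) = ((x ^ i : ℝ) : ℂ) := by
    rw [Complex.ofReal_cpow hx.1.le]; push_cast; ring_nf
  have h2 : (1 - (x:ℂ)) ^ (((p + 1 : ℝ) : ℂ) - 1) = (((1 - x) ^ p : ℝ) : ℂ) := by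
    rw [Complex.ofReal_cpow (by linarith [hx.2])]; push_cast; ring_nf
  simp only []
  rw [h1, h2, ← Complex.ofReal_mul, Complex.norm_real, Real.norm_of_nonneg, mul_comm]
  have := Real.rpow_nonneg hx.1.le i
  have := Real.rpow_nonneg (show 0 ≤ 1 - x by linarith [hx.2]) p
  positivity

/-- kernel -/
noncomputable def auxK (ψ : ℝ → ℝ) (i a t : ℝ) : ℝ :=
  ψ ((1 - a) * t + a) * ((a + ((1 - a) * t + a)) / 2) ^ i

lemma auxK_pos {a t : ℝ} (ha : 0 < a) (ht : t ∈ Icc (0:ℝ) 1) : 0 < (1 - a) * t + a := by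
  obtain ⟨h0, h1⟩ := ht
  rcases eq_or_lt_of_le h0 with h | h
  · subst h; linarith
  · nlinarith [mul_nonneg ha.le (sub_nonneg.2 h1)]

lemma auxK_cont (ψ : ℝ → ℝ) (hψ : ContinuousOn ψ (Ioi 0)) (i : ℝ) :
    ContinuousOn (fun q : ℝ × ℝ => auxK ψ i q.1 q.2) {q | 0 < q.1 ∧ 0 < (1 - q.1) * q.2 + q.1} := by
  unfold auxK
  refine ContinuousOn.mul ?_ ?_
  · refine hψ.comp (by fun_prop) ?_
    intro q hq
    exact hq.2
  · refine ContinuousOn.rpow_const (by fun_prop) ?_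
    intro q hq
    left
    have := hq.1
    have := hq.2
    positivity

/-- normalized integral -/
noncomputable def auxH (ψ : ℝ → ℝ) (p i a : ℝ) : ℝ :=
  ∫ t in (0:ℝ)..1, auxK ψ i a t * ((1 - t) ^ p * t ^ i)

open MeasureTheory in
lemma auxH_cont (ψ : ℝ → ℝ) (hψ : ContinuousOn ψ (Ioi 0)) (p i : ℝ) (hp : -1 < p) (hi : -1 < i)
    (a₀ : ℝ) (ha₀ : 0 < a₀) : ContinuousAt (auxH ψ p i) a₀ := by
  have hK := auxK_cont ψ hψ i
  have hopen : IsOpen {q : ℝ × ℝ | 0 < q.1 ∧ 0 < (1 - q.1) * q.2 + q.1} :=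
    (isOpen_lt continuous_const continuous_fst).and
      (isOpen_lt continuous_const (by fun_prop))
  have hcomp : IsCompact (Icc (a₀ / 2) (2 * a₀) ×ˢ Icc (0:ℝ) 1) := isCompact_Icc.prod isCompact_Icc
  obtain ⟨C, hC⟩ := hcomp.exists_bound_of_continuousOn (hK.mono (by
    rintro ⟨a, t⟩ ⟨h1, h2⟩
    have : 0 < a := by have := h1.1; simp only at this; linarith
    exact ⟨this, auxK_pos this h2⟩))
  have hw := aux_w p i hp hi
  have hnb : Icc (a₀ / 2) (2 * a₀) ∈ nhds a₀ := Icc_mem_nhds (by linarith) (by linarith)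
  refine intervalIntegral.continuousAt_of_dominated_interval
    (bound := fun t => C * ‖(1 - t) ^ p * t ^ i‖) ?_ ?_ (hw.norm.const_mul C) ?_
  · filter_upwards [hnb] with a ha
    have ha' : 0 < a := by linarith [ha.1]
    refine AEStronglyMeasurable.mul ?_ ?_
    · rw [uIoc_of_le zero_le_one]
      refine ContinuousOn.aestronglyMeasurable ?_ measurableSet_Ioc
      refine hK.comp (f := fun t : ℝ => (a, t)) (by fun_prop) ?_
      intro t ht
      exact ⟨ha', auxK_pos ha' ⟨ht.1.le, ht.2⟩⟩
    · rw [uIoc_of_le zero_le_one]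
      exact hw.1.aestronglyMeasurable
  · filter_upwards [hnb] with a ha
    refine Eventually.of_forall ?_
    intro t ht
    rw [uIoc_of_le zero_le_one] at ht
    rw [norm_mul]
    exact mul_le_mul_of_nonneg_right (hC (a, t) ⟨ha, ht.1.le, ht.2⟩) (norm_nonneg _)
  · refine Eventually.of_forall ?_
    intro t ht
    rw [uIoc_of_le zero_le_one] at ht
    refine ContinuousAt.mul ?_ continuousAt_const
    have h1 : ContinuousAt (fun q : ℝ × ℝ => auxK ψ i q.1 q.2) (a₀, t) :=
      hK.continuousAt (hopen.mem_nhds ⟨ha₀, auxK_pos ha₀ ⟨ht.1.le, ht.2⟩⟩)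
    exact ContinuousAt.comp (f := fun a : ℝ => (a, t)) h1 (by fun_prop)

/-- `gfun` in the variable `a = exp (-η)` -/
noncomputable def auxG (φ : ℝ → ℝ) (i a : ℝ) : ℝ :=
  ∫ E in a..1, φ E * (((E ^ 2 - a ^ 2) / 2) ^ i)

lemma gfun_eq_auxG (φ : ℝ → ℝ) (i η : ℝ) : gfun φ i η = auxG φ i (Real.exp (-η)) := by
  unfold gfun auxG
  rw [← Real.exp_nat_mul]
  push_cast
  rw [show (2:ℝ) * -η = -2 * η by ring]

lemma auxG_eq (φ ψ : ℝ → ℝ) (p i : ℝ) (hφ : ∀ x ∈ Ioo (0:ℝ) 1, φ x = (1 - x) ^ p * ψ x)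
    (a : ℝ) (ha : 0 < a) (ha1 : a < 1) :
    auxG φ i a = (1 - a) ^ (i + p + 1) * auxH ψ p i a := by
  have h := intervalIntegral.smul_integral_comp_mul_add (a := 0) (b := 1)
    (fun E => φ E * (((E ^ 2 - a ^ 2) / 2) ^ i)) (1 - a) a
  rw [show (1 - a) * 0 + a = a by ring, show (1 - a) * 1 + a = 1 by ring] at h
  unfold auxG auxH
  rw [← h, smul_eq_mul, ← intervalIntegral.integral_const_mul,
    ← intervalIntegral.integral_const_mul]
  refine intervalIntegral.integral_congr_Ioo_of_le zero_le_one ?_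
  intro t ht
  obtain ⟨h0, h1⟩ := ht
  have ha' : 0 < 1 - a := by linarith
  have ht' : 0 < 1 - t := by linarith
  have hx0 : 0 < (1 - a) * t + a := by positivity
  have hx1 : 1 - ((1 - a) * t + a) = (1 - a) * (1 - t) := by ring
  have hx2 : (1 - a) * t + a < 1 := by nlinarith [mul_pos ha' ht']
  simp only [auxK]
  rw [hφ _ ⟨hx0, hx2⟩, hx1, Real.mul_rpow ha'.le ht'.le,
    show (((1 - a) * t + a) ^ 2 - a ^ 2) / 2 = ((1 - a) * t) * ((a + ((1 - a) * t + a)) / 2) by ring,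
    Real.mul_rpow (by positivity) (by positivity), Real.mul_rpow ha'.le h0.le,
    Real.rpow_add ha', Real.rpow_add ha', Real.rpow_one]
  ring

open MeasureTheory in
lemma aux_int (φ ψ : ℝ → ℝ) (hψ : ContinuousOn ψ (Ioi 0)) (p i : ℝ) (hp : -1 < p) (hi : 0 < i)
    (hφ : ∀ x ∈ Ioo (0:ℝ) 1, φ x = (1 - x) ^ p * ψ x)
    (a : ℝ) (ha : 0 < a) (ha1 : a < 1) :
    IntegrableOn (fun E => φ E * (((E ^ 2 - a ^ 2) / 2) ^ i)) (Ioo a 1) := by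
  have h1 : IntervalIntegrable (fun x : ℝ => (1 - x) ^ p) volume a 1 := by
    have := (intervalIntegral.intervalIntegrable_rpow' (a := 1 - a) (b := 0) hp).comp_sub_left 1
    simpa using this
  have h2 : ContinuousOn (fun E => ψ E * (((E ^ 2 - a ^ 2) / 2) ^ i)) (uIcc a 1) := by
    rw [uIcc_of_le ha1.le]
    refine ContinuousOn.mul (hψ.mono ?_) (ContinuousOn.rpow_const (by fun_prop) ?_)
    · intro x hx
      exact lt_of_lt_of_le ha hx.1
    · intro x hx
      exact Or.inr hi.le
  have h3 := h1.mul_continuousOn h2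
  rw [intervalIntegrable_iff_integrableOn_Ioo_of_le ha1.le] at h3
  refine h3.congr_fun ?_ measurableSet_Ioo
  intro x hx
  simp only []
  rw [hφ x ⟨ha.trans hx.1, hx.2⟩]
  ring

open MeasureTheory in
lemma aux_inner (i : ℝ) (hi : 0 < i) (a E : ℝ) (ha : 0 < a) (haE : a < E) :
    IntegrableOn (fun b => i * b * ((E ^ 2 - b ^ 2) / 2) ^ (i - 1)) (Ioo a E) ∧
    ∫ b in Ioo a E, i * b * ((E ^ 2 - b ^ 2) / 2) ^ (i - 1) = ((E ^ 2 - a ^ 2) / 2) ^ i := by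
  have hc : ContinuousOn (fun b : ℝ => -((E ^ 2 - b ^ 2) / 2) ^ i) (Icc a E) :=
    (ContinuousOn.rpow_const (by fun_prop) (fun x _ => Or.inr hi.le)).neg
  have hd : ∀ b ∈ Ioo a E, HasDerivAt (fun b : ℝ => -((E ^ 2 - b ^ 2) / 2) ^ i)
      (i * b * ((E ^ 2 - b ^ 2) / 2) ^ (i - 1)) b := by
    intro b hb
    have hpos : 0 < (E ^ 2 - b ^ 2) / 2 := by nlinarith [hb.1, hb.2]
    have h1 : HasDerivAt (fun b : ℝ => (E ^ 2 - b ^ 2) / 2) (-b) b := by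
      have := (((hasDerivAt_id b).pow 2).const_sub (E ^ 2)).div_const 2
      refine this.congr_deriv ?_
      simp
      ring
    have := (h1.rpow_const (p := i) (Or.inl hpos.ne')).neg
    refine this.congr_deriv ?_
    ring
  have hn : ∀ b ∈ Ioo a E, 0 ≤ i * b * ((E ^ 2 - b ^ 2) / 2) ^ (i - 1) := by
    intro b hb
    have hpos : 0 < (E ^ 2 - b ^ 2) / 2 := by nlinarith [hb.1, hb.2]
    have := ha.trans hb.1
    positivity
  have hint := intervalIntegral.integrableOn_deriv_of_nonneg hc hd hn
  refine ⟨hint.mono_set Ioo_subset_Ioc_self, ?_⟩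
  have := intervalIntegral.integral_eq_sub_of_hasDerivAt_of_le haE.le hc hd
    ((intervalIntegrable_iff_integrableOn_Ioc_of_le haE.le).2 hint)
  rw [← integral_Ioc_eq_integral_Ioo, ← intervalIntegral.integral_of_le haE.le, this]
  simp [Real.zero_rpow hi.ne']

open MeasureTheory in
lemma aux_fubini (φ ψ : ℝ → ℝ) (hφc : ContinuousOn φ (Ioo 0 1))
    (hφn : ∀ x ∈ Ioo (0:ℝ) 1, 0 ≤ φ x)
    (hψ : ContinuousOn ψ (Ioi 0)) (p i : ℝ) (hp : -1 < p) (hi : 0 < i)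
    (hφ : ∀ x ∈ Ioo (0:ℝ) 1, φ x = (1 - x) ^ p * ψ x)
    (a : ℝ) (ha : 0 < a) (ha1 : a < 1) :
    IntervalIntegrable (fun b => i * b * auxG φ (i - 1) b) volume a 1 ∧
    auxG φ i a = ∫ b in a..1, i * b * auxG φ (i - 1) b := by
  set S : Set (ℝ × ℝ) := {q | a < q.1 ∧ q.1 < q.2 ∧ q.2 < 1} with hS
  set F : ℝ × ℝ → ℝ := fun q => φ q.2 * (i * q.1 * ((q.2 ^ 2 - q.1 ^ 2) / 2) ^ (i - 1)) with hF
  have hSo : IsOpen S := (isOpen_lt continuous_const continuous_fst).and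
    ((isOpen_lt continuous_fst continuous_snd).and (isOpen_lt continuous_snd continuous_const))
  have hFc : ContinuousOn F S := by
    refine ContinuousOn.mul (hφc.comp (by fun_prop) ?_)
      (ContinuousOn.mul (by fun_prop) (ContinuousOn.rpow_const (by fun_prop) ?_))
    · rintro q ⟨h1, h2, h3⟩
      exact ⟨by linarith, h3⟩
    · rintro q ⟨h1, h2, h3⟩
      left
      have : 0 < (q.2 ^ 2 - q.1 ^ 2) / 2 := by nlinarith
      exact this.ne'
  have hFn : ∀ q, 0 ≤ S.indicator F q := by
    intro q
    refine indicator_nonneg ?_ q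
    rintro q ⟨h1, h2, h3⟩
    have h4 : 0 < (q.2 ^ 2 - q.1 ^ 2) / 2 := by nlinarith
    have h5 := hφn q.2 ⟨by linarith, h3⟩
    have h6 : 0 < q.1 := by linarith
    simp only [hF]
    positivity
  have hmeas : AEStronglyMeasurable (S.indicator F) ((volume : Measure ℝ).prod volume) :=
    (aestronglyMeasurable_indicator_iff hSo.measurableSet).2
      (hFc.aestronglyMeasurable hSo.measurableSet)
  have hE1 : ∀ E ∈ Ioo a 1, (fun b => S.indicator F (b, E)) =
      (Ioo a E).indicator (fun b => φ E * (i * b * ((E ^ 2 - b ^ 2) / 2) ^ (i - 1))) := by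
    intro E hE
    funext b
    by_cases hb : b ∈ Ioo a E
    · rw [indicator_of_mem hb, indicator_of_mem (show (b, E) ∈ S from ⟨hb.1, hb.2, hE.2⟩)]
    · rw [indicator_of_notMem hb, indicator_of_notMem]
      rintro ⟨h1, h2, h3⟩
      exact hb ⟨h1, h2⟩
  have hE2 : ∀ E ∉ Ioo a 1, (fun b => S.indicator F (b, E)) = fun _ => 0 := by
    intro E hE
    funext b
    rw [indicator_of_notMem]
    rintro ⟨h1, h2, h3⟩
    exact hE ⟨h1.trans h2, h3⟩
  have hb1 : ∀ b ∈ Ioo a 1, (fun E => S.indicator F (b, E)) =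
      (Ioo b 1).indicator (fun E => (i * b) * (φ E * ((E ^ 2 - b ^ 2) / 2) ^ (i - 1))) := by
    intro b hb
    funext E
    by_cases hE : E ∈ Ioo b 1
    · rw [indicator_of_mem hE, indicator_of_mem (show (b, E) ∈ S from ⟨hb.1, hE.1, hE.2⟩)]
      simp only [hF]
      ring
    · rw [indicator_of_notMem hE, indicator_of_notMem]
      rintro ⟨h1, h2, h3⟩
      exact hE ⟨h2, h3⟩
  have hb2 : ∀ b ∉ Ioo a 1, (fun E => S.indicator F (b, E)) = fun _ => 0 := by
    intro b hb
    funext E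
    rw [indicator_of_notMem]
    rintro ⟨h1, h2, h3⟩
    exact hb ⟨h1, h2.trans h3⟩
  have hIE : (fun E => ∫ b, S.indicator F (b, E)) =
      (Ioo a 1).indicator (fun E => φ E * (((E ^ 2 - a ^ 2) / 2) ^ i)) := by
    funext E
    by_cases hE : E ∈ Ioo a 1
    · rw [indicator_of_mem hE, hE1 E hE, integral_indicator measurableSet_Ioo,
        integral_const_mul, (aux_inner i hi a E ha hE.1).2]
    · rw [indicator_of_notMem hE, hE2 E hE, integral_zero]
  have hIb : (fun b => ∫ E, S.indicator F (b, E)) =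
      (Ioo a 1).indicator (fun b => i * b * auxG φ (i - 1) b) := by
    funext b
    by_cases hb : b ∈ Ioo a 1
    · rw [indicator_of_mem hb, hb1 b hb, integral_indicator measurableSet_Ioo,
        integral_const_mul, auxG, intervalIntegral.integral_of_le hb.2.le,
        integral_Ioc_eq_integral_Ioo]
    · rw [indicator_of_notMem hb, hb2 b hb, integral_zero]
  have hint : Integrable (S.indicator F) ((volume : Measure ℝ).prod volume) := by
    rw [integrable_prod_iff' hmeas]
    constructor
    · refine Eventually.of_forall ?_
      intro E
      by_cases hE : E ∈ Ioo a 1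
      · rw [hE1 E hE, integrable_indicator_iff measurableSet_Ioo]
        exact (aux_inner i hi a E ha hE.1).1.const_mul _
      · rw [hE2 E hE]
        exact integrable_zero _ _ _
    · simp_rw [Real.norm_of_nonneg (hFn _)]
      rw [hIE, integrable_indicator_iff measurableSet_Ioo]
      exact aux_int φ ψ hψ p i hp hi hφ a ha ha1
  constructor
  · have := hint.integral_prod_left
    rw [hIb, integrable_indicator_iff measurableSet_Ioo] at this
    exact (intervalIntegrable_iff_integrableOn_Ioo_of_le ha1.le).2 this
  · have h := integral_integral_swap (f := fun b E => S.indicator F (b, E)) hint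
    rw [hIE, hIb, integral_indicator measurableSet_Ioo, integral_indicator measurableSet_Ioo] at h
    rw [auxG, intervalIntegral.integral_of_le ha1.le, intervalIntegral.integral_of_le ha1.le,
      integral_Ioc_eq_integral_Ioo, integral_Ioc_eq_integral_Ioo, h]

lemma auxG_cont (φ ψ : ℝ → ℝ) (hψ : ContinuousOn ψ (Ioi 0)) (p i : ℝ) (hp : -1 < p) (hi : -1 < i)
    (hφ : ∀ x ∈ Ioo (0:ℝ) 1, φ x = (1 - x) ^ p * ψ x)
    (a : ℝ) (ha : a ∈ Ioo (0:ℝ) 1) : ContinuousAt (auxG φ i) a := by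
  have h : ContinuousAt (fun a => (1 - a) ^ (i + p + 1) * auxH ψ p i a) a := by
    refine ContinuousAt.mul (ContinuousAt.rpow_const (by fun_prop) ?_)
      (auxH_cont ψ hψ p i hp hi a ha.1)
    left
    linarith [ha.2]
  refine h.congr ?_
  filter_upwards [isOpen_Ioo.mem_nhds ha] with b hb
  exact (auxG_eq φ ψ p i hφ b hb.1 hb.2).symm

lemma auxG_deriv (φ ψ : ℝ → ℝ) (hφc : ContinuousOn φ (Ioo 0 1))
    (hφn : ∀ x ∈ Ioo (0:ℝ) 1, 0 ≤ φ x)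
    (hψ : ContinuousOn ψ (Ioi 0)) (p i : ℝ) (hp : -1 < p) (hi : 0 < i)
    (hφ : ∀ x ∈ Ioo (0:ℝ) 1, φ x = (1 - x) ^ p * ψ x)
    (a : ℝ) (ha : a ∈ Ioo (0:ℝ) 1) :
    HasDerivAt (auxG φ i) (-(i * a * auxG φ (i - 1) a)) a := by
  have hc : ∀ b ∈ Ioo (0:ℝ) 1, ContinuousAt (fun b => i * b * auxG φ (i - 1) b) b := fun b hb =>
    ContinuousAt.mul (by fun_prop) (auxG_cont φ ψ hψ p (i - 1) hp (by linarith) hφ b hb)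
  have h := intervalIntegral.integral_hasDerivAt_left
    (aux_fubini φ ψ hφc hφn hψ p i hp hi hφ a ha.1 ha.2).1
    (ContinuousAt.stronglyMeasurableAtFilter isOpen_Ioo hc a ha) (hc a ha)
  refine h.congr_of_eventuallyEq ?_
  filter_upwards [isOpen_Ioo.mem_nhds ha] with b hb
  exact (aux_fubini φ ψ hφc hφn hψ p i hp hi hφ b hb.1 hb.2).2

lemma gfun_deriv (φ ψ : ℝ → ℝ) (hφc : ContinuousOn φ (Ioo 0 1))
    (hφn : ∀ x ∈ Ioo (0:ℝ) 1, 0 ≤ φ x)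
    (hψ : ContinuousOn ψ (Ioi 0)) (p i : ℝ) (hp : -1 < p) (hi : 0 < i)
    (hφ : ∀ x ∈ Ioo (0:ℝ) 1, φ x = (1 - x) ^ p * ψ x)
    (η : ℝ) (hη : 0 < η) :
    HasDerivAt (gfun φ i) (i * Real.exp (-2 * η) * gfun φ (i - 1) η) η := by
  have ha : Real.exp (-η) ∈ Ioo (0:ℝ) 1 := ⟨Real.exp_pos _, by rw [Real.exp_lt_one_iff]; linarith⟩
  have h1 := auxG_deriv φ ψ hφc hφn hψ p i hp hi hφ _ ha
  have h2 : HasDerivAt (fun η : ℝ => Real.exp (-η)) (Real.exp (-η) * (-1)) η :=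
    ((hasDerivAt_id η).neg).exp
  have h3 := h1.comp η h2
  rw [show gfun φ i = auxG φ i ∘ fun η : ℝ => Real.exp (-η) from funext (gfun_eq_auxG φ i)]
  refine h3.congr_deriv ?_
  rw [gfun_eq_auxG, show -2 * η = -η + -η by ring, Real.exp_add]
  ring

lemma gfun_asymp (φ ψ : ℝ → ℝ) (hψ : ContinuousOn ψ (Ioi 0)) (hψ1 : 0 < ψ 1)
    (p i : ℝ) (hp : -1 < p) (hi : -1 < i)
    (hφ : ∀ x ∈ Ioo (0:ℝ) 1, φ x = (1 - x) ^ p * ψ x) :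
    ∃ c > (0:ℝ), Tendsto (fun η => gfun φ i η / (c * η ^ (i + p + 1)))
        (nhdsWithin 0 (Ioi 0)) (nhds 1) := by
  have hpos : 0 < auxH ψ p i 1 := by
    have : auxH ψ p i 1 = ψ 1 * ∫ t in (0:ℝ)..1, (1 - t) ^ p * t ^ i := by
      unfold auxH auxK
      rw [← intervalIntegral.integral_const_mul]
      norm_num
    rw [this]
    refine mul_pos hψ1 (intervalIntegral.intervalIntegral_pos_of_pos_on (aux_w p i hp hi) ?_ one_pos)
    intro t ht
    have := ht.1
    have : 0 < 1 - t := by linarith [ht.2]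
    positivity
  refine ⟨auxH ψ p i 1, hpos, ?_⟩
  have hexp : Tendsto (fun η : ℝ => Real.exp (-η)) (nhdsWithin 0 (Ioi 0)) (nhds 1) := by
    have : Continuous (fun η : ℝ => Real.exp (-η)) := by fun_prop
    have := (this.tendsto 0).mono_left (nhdsWithin_le_nhds (s := Ioi 0))
    simpa using this
  have hH : Tendsto (fun η : ℝ => auxH ψ p i (Real.exp (-η)) / auxH ψ p i 1)
      (nhdsWithin 0 (Ioi 0)) (nhds 1) := by
    have := ((auxH_cont ψ hψ p i hp hi 1 one_pos).tendsto.comp hexp).div_const (auxH ψ p i 1)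
    rwa [div_self hpos.ne'] at this
  have hslope : Tendsto (fun η : ℝ => (1 - Real.exp (-η)) / η)
      (nhdsWithin 0 (Ioi 0)) (nhds 1) := by
    have h2 : HasDerivAt (fun η : ℝ => Real.exp (-η)) (Real.exp (-0) * (-1)) 0 :=
      ((hasDerivAt_id (0:ℝ)).neg).exp
    have h3 := (hasDerivAt_iff_tendsto_slope.1 h2).mono_left
      (nhdsWithin_mono (0:ℝ) (s := Ioi 0) (fun x hx => ne_of_gt hx))
    have h4 := h3.neg
    simp only [neg_zero, Real.exp_zero, one_mul, neg_neg] at h4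
    refine h4.congr ?_
    intro η
    rw [slope_def_field]
    simp only [neg_zero, Real.exp_zero, sub_zero]
    ring
  have hpow := hslope.rpow_const (p := i + p + 1) (Or.inl one_ne_zero)
  rw [Real.one_rpow] at hpow
  have := hpow.mul hH
  rw [one_mul] at this
  refine this.congr' ?_
  filter_upwards [self_mem_nhdsWithin] with η hη
  have hη' : 0 < η := hη
  have ha1 : Real.exp (-η) < 1 := by rw [Real.exp_lt_one_iff]; linarith
  rw [gfun_eq_auxG, auxG_eq φ ψ p i hφ _ (Real.exp_pos _) ha1,
    Real.div_rpow (by linarith) hη'.le]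
  field_simp

lemma exists_psi (φ : ℝ → ℝ)
    (hφcont : ContinuousOn φ (Ioo 0 1))
    (φm p : ℝ) (hφm : 0 < φm)
    (hasym : Tendsto (fun x => φ x / (φm * (1 - x) ^ p))
      (nhdsWithin 1 (Ioo 0 1)) (nhds 1)) :
    ∃ ψ : ℝ → ℝ, ContinuousOn ψ (Ioi 0) ∧ 0 < ψ 1 ∧
      ∀ x ∈ Ioo (0:ℝ) 1, φ x = (1 - x) ^ p * ψ x := by
  refine ⟨fun x => if x < 1 then φ x / (1 - x) ^ p else φm, ?_, by simpa using hφm, ?_⟩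
  · intro x hx
    refine ContinuousAt.continuousWithinAt ?_
    rcases lt_trichotomy x 1 with h | h | h
    · have hx' : x ∈ Ioo (0:ℝ) 1 := ⟨hx, h⟩
      have h1 : ContinuousAt (fun x => φ x / (1 - x) ^ p) x := by
        have h0 : 0 < 1 - x := by linarith
        refine (hφcont.continuousAt (isOpen_Ioo.mem_nhds hx')).div
          (ContinuousAt.rpow_const (by fun_prop) (Or.inl h0.ne')) (by positivity)
      refine h1.congr ?_
      filter_upwards [isOpen_Iio.mem_nhds h] with y hy
      rw [if_pos (show y < 1 from hy)]
    · subst h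
      rw [continuousAt_iff_continuous_left'_right']
      constructor
      · unfold ContinuousWithinAt
        simp only [lt_irrefl, if_false]
        rw [← nhdsWithin_Ioo_eq_nhdsLT (zero_lt_one' ℝ)]
        have h2 := hasym.const_mul φm
        rw [mul_one] at h2
        refine h2.congr' ?_
        filter_upwards [self_mem_nhdsWithin] with y hy
        simp only [if_pos hy.2]
        field_simp
      · unfold ContinuousWithinAt
        simp only [lt_irrefl, if_false]
        refine tendsto_const_nhds.congr' ?_
        filter_upwards [self_mem_nhdsWithin] with y hy
        rw [if_neg (not_lt.2 (le_of_lt hy))]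
    · refine continuousAt_const.congr (f := fun _ => φm) ?_
      filter_upwards [isOpen_Ioi.mem_nhds h] with y hy
      rw [if_neg (not_lt.2 (le_of_lt hy))]
  · intro x hx
    have h0 : 0 < 1 - x := by linarith [hx.2]
    have : 0 < (1 - x) ^ p := by positivity
    simp only [if_pos hx.2]
    field_simp

/-- If `φ : (0,1) → [0,∞)` is continuous and asymptotically
polytropic, `φ(ℰ) = φ₋(1-ℰ)^{n-3/2}(1+o(1))` as `ℰ → 1⁻` with `φ₋ > 0`, `n > 1/2`,
then for every `i > -1` there is `c_i > 0` with
`g_i(η) = c_i η^{i+n-1/2}(1+o(1))` as `η → 0⁺`; moreover for `i > 0`,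
`g_i'(η) = i e^{-2η} g_{i-1}(η) = i c_{i-1} η^{i+n-3/2}(1+o(1))`. -/
theorem stmt13
    (φ : ℝ → ℝ)
    (hφcont : ContinuousOn φ (Ioo 0 1))
    (hφnonneg : ∀ x ∈ Ioo (0:ℝ) 1, 0 ≤ φ x)
    (φm n : ℝ) (hφm : 0 < φm) (hn : 1 / 2 < n)
    (hasym : Tendsto (fun x => φ x / (φm * (1 - x) ^ (n - 3 / 2)))
      (nhdsWithin 1 (Ioo 0 1)) (nhds 1)) :
    (∀ i : ℝ, -1 < i → ∃ c > (0:ℝ),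
      Tendsto (fun η => gfun φ i η / (c * η ^ (i + n - 1 / 2)))
        (nhdsWithin 0 (Ioi 0)) (nhds 1)) ∧
    (∀ i : ℝ, 0 < i →
      (∀ η : ℝ, 0 < η →
        HasDerivAt (gfun φ i) (i * Real.exp (-2 * η) * gfun φ (i - 1) η) η) ∧
      ∃ c > (0:ℝ),
        Tendsto (fun η => gfun φ (i - 1) η / (c * η ^ (i + n - 3 / 2)))
          (nhdsWithin 0 (Ioi 0)) (nhds 1) ∧
        Tendsto (fun η => deriv (gfun φ i) η / (i * c * η ^ (i + n - 3 / 2)))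
          (nhdsWithin 0 (Ioi 0)) (nhds 1)) := by
  obtain ⟨ψ, hψ, hψ1, hφ⟩ := exists_psi φ hφcont φm (n - 3 / 2) hφm hasym
  have hp : -1 < n - 3 / 2 := by linarith
  refine ⟨?_, ?_⟩
  · intro i hi
    have := gfun_asymp φ ψ hψ hψ1 (n - 3 / 2) i hp hi hφ
    rwa [show i + (n - 3 / 2) + 1 = i + n - 1 / 2 by ring] at this
  · intro i hi
    have hd := gfun_deriv φ ψ hφcont hφnonneg hψ (n - 3 / 2) i hp hi hφ
    refine ⟨hd, ?_⟩
    obtain ⟨c, hc, h⟩ := gfun_asymp φ ψ hψ hψ1 (n - 3 / 2) (i - 1) hp (by linarith) hφ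
    rw [show i - 1 + (n - 3 / 2) + 1 = i + n - 3 / 2 by ring] at h
    refine ⟨c, hc, h, ?_⟩
    have hexp : Tendsto (fun η : ℝ => Real.exp (-2 * η)) (nhdsWithin 0 (Ioi 0)) (nhds 1) := by
      have h1 : Continuous (fun η : ℝ => Real.exp (-2 * η)) := by fun_prop
      have h2 := (h1.tendsto 0).mono_left (nhdsWithin_le_nhds (s := Ioi 0))
      simpa using h2
    have h3 := hexp.mul h
    rw [one_mul] at h3
    refine h3.congr' ?_
    filter_upwards [self_mem_nhdsWithin] with η hη
    have hη' : 0 < η := hη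
    rw [(hd η hη').deriv]
    field_simp
end

section
/- For every initial point (U₀,V₀,Ω₀) ∈ [0,1]² × (0,1) there exists a unique C¹ solution λ ↦ (U(λ),V(λ),Ω(λ)) of the Einstein–Vlasov dynamical system with (U,V,Ω)(0) = (U₀,V₀,Ω₀); this solution is defined for all λ ∈ ℝ (global existence) and takes values in [0,1]² × (0,1) for all λ. -/
open Filter Set

lemma ev_unique {E : Type*} [NormedAddCommGroup E] [NormedSpace ℝ E] [ProperSpace E]
    (f : E → E) (D : Set E) (hDc : IsClosed D) (hD : Convex ℝ D) (hf : ContDiffOn ℝ 1 f D)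
    (T : ℝ) (x y : ℝ → E)
    (hx : ∀ t ∈ Ioo (-T) T, HasDerivAt x (f (x t)) t ∧ x t ∈ D)
    (hy : ∀ t ∈ Ioo (-T) T, HasDerivAt y (f (y t)) t ∧ y t ∈ D)
    (h0 : x 0 = y 0) : EqOn x y (Ioo (-T) T) := by
  intro t ht
  have hT : |t| < T := abs_lt.2 ht
  obtain ⟨T', h1, h2⟩ := exists_between hT
  have hsub : Icc (-T') T' ⊆ Ioo (-T) T := fun s hs => ⟨by linarith [hs.1], by linarith [hs.2]⟩
  have hcx : ContinuousOn x (Icc (-T') T') := fun s hs =>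
    ((hx s (hsub hs)).1.continuousAt).continuousWithinAt
  have hcy : ContinuousOn y (Icc (-T') T') := fun s hs =>
    ((hy s (hsub hs)).1.continuousAt).continuousWithinAt
  have hb := ((isCompact_Icc.image_of_continuousOn hcx).union
    (isCompact_Icc.image_of_continuousOn hcy)).isBounded
  obtain ⟨R, hR⟩ := hb.subset_closedBall 0
  have hcomp : IsCompact (D ∩ Metric.closedBall 0 R) :=
    (isCompact_closedBall (0 : E) R).inter_left hDc
  obtain ⟨K, hK⟩ := (hf.mono inter_subset_left).exists_lipschitzOnWith one_ne_zero
    (hD.inter (convex_closedBall (0 : E) R)) hcomp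
  have h0T : 0 < T' := lt_of_le_of_lt (abs_nonneg t) h1
  have := ODE_solution_unique_of_mem_Ioo (v := fun _ => f)
    (s := fun _ => D ∩ Metric.closedBall 0 R) (K := K) (a := -T') (b := T') (t₀ := 0)
    (f := x) (g := y) (fun _ _ => hK) ⟨by linarith, h0T⟩
    (fun s hs => ⟨(hx s (hsub (Ioo_subset_Icc_self hs))).1, (hx s (hsub (Ioo_subset_Icc_self hs))).2,
      hR (Or.inl ⟨s, Ioo_subset_Icc_self hs, rfl⟩)⟩)
    (fun s hs => ⟨(hy s (hsub (Ioo_subset_Icc_self hs))).1, (hy s (hsub (Ioo_subset_Icc_self hs))).2,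
      hR (Or.inr ⟨s, Ioo_subset_Icc_self hs, rfl⟩)⟩) h0
  exact this (abs_lt.1 h1)

lemma ev_exists {E : Type*} [NormedAddCommGroup E] [NormedSpace ℝ E] [ProperSpace E]
    (f : E → E) (hf : ContDiff ℝ 1 f) (L : ℝ) (hL : ∀ x, ‖f x‖ ≤ L) (x0 : E) :
    ∃ x : ℝ → E, x 0 = x0 ∧ ∀ t, HasDerivAt x (f (x t)) t := by
  have hL0 : 0 ≤ L := (norm_nonneg _).trans (hL x0)
  have key : ∀ n : ℕ, ∃ x : ℝ → E, x 0 = x0 ∧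
      ∀ t ∈ Ioo (-(n:ℝ)) n, HasDerivAt x (f (x t)) t := by
    intro n
    have hn : (0:ℝ) ≤ n := Nat.cast_nonneg n
    obtain ⟨K, hK⟩ := (hf.contDiffOn (s := Metric.closedBall x0 (L * n))).exists_lipschitzOnWith
      one_ne_zero (convex_closedBall _ _) (isCompact_closedBall _ _)
    have hP : IsPicardLindelof (fun _ => f) (tmin := -(n:ℝ)) (tmax := n)
        ⟨0, by constructor <;> linarith⟩ x0 ⟨L * n, by positivity⟩ 0 ⟨L, hL0⟩ K :=
      { lipschitzOnWith := fun _ _ => hK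
        continuousOn := fun _ _ => continuousOn_const
        norm_le := fun _ _ x _ => hL x
        mul_max_le := by simp; exact le_rfl }
    obtain ⟨x, h1, h2⟩ := hP.exists_eq_forall_mem_Icc_hasDerivWithinAt₀
    exact ⟨x, h1, fun t ht => (h2 t (Ioo_subset_Icc_self ht)).hasDerivAt (Icc_mem_nhds ht.1 ht.2)⟩
  choose x hx0 hx using key
  have hag : ∀ m n : ℕ, m ≤ n → EqOn (x m) (x n) (Ioo (-(m:ℝ)) m) := by
    intro m n hmn
    have hmn' : (m:ℝ) ≤ n := by exact_mod_cast hmn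
    apply ev_unique f univ isClosed_univ convex_univ hf.contDiffOn
    · exact fun t ht => ⟨hx m t ht, trivial⟩
    · exact fun t ht => ⟨hx n t ⟨by linarith [ht.1], by linarith [ht.2]⟩, trivial⟩
    · rw [hx0, hx0]
  have hmem : ∀ t : ℝ, t ∈ Ioo (-((⌈|t|⌉₊ + 1 : ℕ):ℝ)) (⌈|t|⌉₊ + 1 : ℕ) := by
    intro t
    rw [mem_Ioo, ← abs_lt]
    push_cast
    linarith [Nat.le_ceil |t|]
  refine ⟨fun t => x (⌈|t|⌉₊ + 1) t, hx0 _, fun t => ?_⟩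
  refine (hx _ t (hmem t)).congr_of_eventuallyEq ?_
  filter_upwards [Ioo_mem_nhds (hmem t).1 (hmem t).2] with s hs
  rcases le_total (⌈|s|⌉₊ + 1) (⌈|t|⌉₊ + 1) with h | h
  · exact hag _ _ h (hmem s)
  · exact (hag _ _ h hs).symm

lemma ev_pre (σ σ' ω ω' F : ℝ → ℝ)
    (hσderiv : ∀ η : ℝ, 0 < η → HasDerivAt σ (σ' η) η)
    (hσ'cont : ContinuousOn σ' (Ioi 0))
    (hσpos : ∀ η : ℝ, 0 < η → 0 < σ η)
    (hωsmooth : ContDiffOn ℝ (⊤ : ℕ∞) ω (Ioi 0))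
    (hωderiv : ∀ η : ℝ, 0 < η → HasDerivAt ω (ω' η) η)
    (hωpos : ∀ η : ℝ, 0 < η → 0 < ω η)
    (hωmono : StrictMonoOn ω (Ioi 0))
    (hFdef : ∀ η : ℝ, 0 < η → F η = σ η * (ω' η / ω η))
    (hFpos : ∀ η : ℝ, 0 < η → 0 < F η)
    (hωsurj : ∀ y : ℝ, 0 < y → ∃ η : ℝ, 0 < η ∧ ω η = y) :
    ∃ ψ : ℝ → ℝ, (∀ z, 0 < ψ z ∧ ω (ψ z) = Real.exp z) ∧
      ContDiff ℝ 1 (fun z => σ (ψ z)) ∧ ContDiff ℝ 1 (fun z => F (ψ z)) ∧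
      ∀ z, HasDerivAt (fun z => σ (ψ z)) (σ' (ψ z) * (σ (ψ z) / F (ψ z))) z := by
  choose ψ hψ using fun z : ℝ => hωsurj (Real.exp z) (Real.exp_pos z)
  have hmono : StrictMono ψ := by
    intro a b hab
    rw [← hωmono.lt_iff_lt (hψ a).1 (hψ b).1, (hψ a).2, (hψ b).2]
    exact Real.exp_lt_exp.2 hab
  have himg : ψ '' univ = Ioi 0 := by
    ext η
    constructor
    · rintro ⟨z, -, rfl⟩
      exact (hψ z).1
    · intro hη
      refine ⟨Real.log (ω η), trivial, ?_⟩
      apply hωmono.injOn (hψ _).1 hη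
      rw [(hψ _).2, Real.exp_log (hωpos η hη)]
  have hcont : Continuous ψ := by
    rw [continuous_iff_continuousAt]
    intro z
    apply continuousAt_of_monotoneOn_of_image_mem_nhds (s := univ) (hmono.monotone.monotoneOn _)
      univ_mem
    rw [himg]
    exact Ioi_mem_nhds (hψ z).1
  have hder : ∀ z, HasDerivAt ψ (σ (ψ z) / F (ψ z)) z := by
    intro z
    have h1 : HasDerivAt (fun η => Real.log (ω η)) (ω' (ψ z) / ω (ψ z)) (ψ z) :=
      (hωderiv _ (hψ z).1).log (hωpos _ (hψ z).1).ne'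
    have hF := hFpos _ (hψ z).1
    have hFd := hFdef _ (hψ z).1
    have hs := hσpos _ (hψ z).1
    have hne : ω' (ψ z) / ω (ψ z) ≠ 0 := by
      intro h
      rw [h, mul_zero] at hFd
      exact hF.ne' hFd
    have h2 := HasDerivAt.of_local_left_inverse hcont.continuousAt h1 hne
      (Eventually.of_forall fun y => by rw [(hψ y).2, Real.log_exp])
    refine h2.congr_deriv ?_
    rw [hFd]
    generalize ω' (ψ z) / ω (ψ z) = c at *
    field_simp
  have hωd : ContDiffOn ℝ 1 (deriv ω) (Ioi 0) :=
    ((contDiffOn_infty_iff_deriv_of_isOpen isOpen_Ioi).1 hωsmooth).2.of_le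
      (by exact_mod_cast le_top)
  have hω'c : ContDiffOn ℝ 1 ω' (Ioi 0) :=
    hωd.congr fun η hη => ((hωderiv η hη).deriv).symm
  have hω1 : ContDiffOn ℝ 1 ω (Ioi 0) := hωsmooth.of_le (by exact_mod_cast le_top)
  have hσ1 : ContDiffOn ℝ 1 σ (Ioi 0) := by
    rw [show (1 : WithTop ℕ∞) = 0 + 1 from rfl, contDiffOn_succ_iff_deriv_of_isOpen isOpen_Ioi]
    refine ⟨fun η hη => (hσderiv η hη).differentiableAt.differentiableWithinAt, by simp, ?_⟩
    rw [contDiffOn_zero]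
    exact hσ'cont.congr fun η hη => (hσderiv η hη).deriv
  have hF1 : ContDiffOn ℝ 1 F (Ioi 0) :=
    (hσ1.mul (hω'c.div hω1 fun η hη => (hωpos η hη).ne')).congr fun η hη => hFdef η hη
  have hσψ : Continuous fun z => σ (ψ z) := hσ1.continuousOn.comp_continuous hcont fun z => (hψ z).1
  have hFψ : Continuous fun z => F (ψ z) := hF1.continuousOn.comp_continuous hcont fun z => (hψ z).1
  have hψ1 : ContDiff ℝ 1 ψ := by
    rw [contDiff_one_iff_deriv]
    refine ⟨fun z => (hder z).differentiableAt, ?_⟩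
    rw [funext fun z => (hder z).deriv]
    exact hσψ.div hFψ fun z => (hFpos _ (hψ z).1).ne'
  exact ⟨ψ, hψ, hσ1.comp_contDiff hψ1 fun z => (hψ z).1, hF1.comp_contDiff hψ1 fun z => (hψ z).1,
    fun z => (hσderiv _ (hψ z).1).comp z (hder z)⟩

/-- Inverse of the odds rescaling by `s`. -/
noncomputable def evQ (s x : ℝ) : ℝ := x / (s * (1 - x) + x)

/-- The quantity `H`. -/
noncomputable def evH (s u v : ℝ) : ℝ := (1 - u + s * u) * v

/-- The logarithmic rate of `U` without the `σ'` term. -/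
noncomputable def evA (l s u v : ℝ) : ℝ :=
  (3 + 2 * l - (4 + 2 * l) * u) * (1 - v) - (1 + s) * evH s u v

/-- The logarithmic rate of `V` without the `σ'` term. -/
noncomputable def evB (s u v : ℝ) : ℝ := (2 * u - 1) * (1 - v + 2 * s * v)

lemma evden {s x : ℝ} (hs : 0 < s) (hx : x ∈ Icc (0:ℝ) 1) : 0 < s * (1 - x) + x := by
  rcases eq_or_lt_of_le hx.1 with h | h
  · rw [← h]; simpa using hs
  · have := mul_nonneg hs.le (sub_nonneg.2 hx.2)
    linarith

lemma evQ_mem {s x : ℝ} (hs : 0 < s) (hx : x ∈ Icc (0:ℝ) 1) : evQ s x ∈ Icc (0:ℝ) 1 := by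
  have h := evden hs hx
  refine ⟨div_nonneg hx.1 h.le, ?_⟩
  rw [evQ, div_le_one h]
  have := mul_nonneg hs.le (sub_nonneg.2 hx.2)
  linarith

lemma evQ_inv {s x : ℝ} (hs : 0 < s) (hx : x ∈ Icc (0:ℝ) 1) : evQ s (evQ s⁻¹ x) = x := by
  have h := evden (inv_pos.2 hs) hx
  have h' : 0 < 1 - x + s * x := by
    have : 1 - x + s * x = s * (s⁻¹ * (1 - x) + x) := by field_simp
    rw [this]; positivity
  have h3 : evQ s⁻¹ x = s * x / (1 - x + s * x) := by
    unfold evQ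
    rw [div_eq_div_iff h.ne' h'.ne']
    field_simp
  have h4 : s * (1 - s * x / (1 - x + s * x)) + s * x / (1 - x + s * x)
      = s / (1 - x + s * x) := by
    field_simp
    ring
  rw [h3, evQ, h4]
  field_simp

lemma evQ_deriv {s X : ℝ → ℝ} {a c t : ℝ} (hs : 0 < s t) (hX : X t ∈ Icc (0:ℝ) 1)
    (hds : HasDerivAt s (s t * c) t) (hdX : HasDerivAt X (X t * (1 - X t) * a) t) :
    HasDerivAt (fun t => evQ (s t) (X t)) (evQ (s t) (X t) * (1 - evQ (s t) (X t)) * (a - c)) t := by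
  have h := evden hs hX
  have h1 := hdX.div ((hds.mul (hdX.const_sub 1)).add hdX) h.ne'
  refine h1.congr_deriv ?_
  simp only [Pi.add_apply, Pi.mul_apply]
  unfold evQ
  generalize X t = x at *
  generalize s t = r at *
  obtain ⟨d, hd⟩ : ∃ d, r * (1 - x) + x = d := ⟨_, rfl⟩
  rw [hd] at h ⊢
  have h2 : 1 - x / d = r * (1 - x) / d := by
    rw [eq_div_iff h.ne', sub_mul, div_mul_cancel₀ _ h.ne']
    linarith
  rw [h2, div_mul_div_comm, div_mul_eq_mul_div, ← pow_two]
  congr 1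
  rw [← hd]
  ring

lemma evH_mem {s u v : ℝ} (hs : s ∈ Ioo (0:ℝ) 1) (hu : u ∈ Icc (0:ℝ) 1) (hv : v ∈ Icc (0:ℝ) 1) :
    evH s u v ∈ Icc (0:ℝ) 1 := by
  obtain ⟨s0, s1⟩ := hs
  obtain ⟨u0, u1⟩ := hu
  obtain ⟨v0, v1⟩ := hv
  have h0 : 0 ≤ 1 - u + s * u := by nlinarith
  have h1 : 1 - u + s * u ≤ 1 := by nlinarith
  exact ⟨mul_nonneg h0 v0, mul_le_one₀ h1 v0 v1⟩

lemma evA_le {l s u v : ℝ} (hl : -1 < l) (hs : s ∈ Ioo (0:ℝ) 1) (hu : u ∈ Icc (0:ℝ) 1)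
    (hv : v ∈ Icc (0:ℝ) 1) : |evA l s u v| ≤ 7 + 2 * l := by
  obtain ⟨h0, h1⟩ := evH_mem hs hu hv
  unfold evA
  generalize evH s u v = H at *
  obtain ⟨s0, s1⟩ := hs
  obtain ⟨u0, u1⟩ := hu
  obtain ⟨v0, v1⟩ := hv
  have e1 : |(3 + 2 * l - (4 + 2 * l) * u) * (1 - v)| ≤ (3 + 2 * l) * 1 := by
    rw [abs_mul]
    refine mul_le_mul ?_ ?_ (abs_nonneg _) (by linarith)
    · rw [abs_le]; constructor <;> nlinarith
    · rw [abs_le]; constructor <;> linarith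
  have e2 : |(1 + s) * H| ≤ 2 * 1 := by
    rw [abs_mul]
    refine mul_le_mul ?_ ?_ (abs_nonneg _) (by linarith)
    · rw [abs_le]; constructor <;> linarith
    · rw [abs_le]; constructor <;> linarith
  have := abs_sub ((3 + 2 * l - (4 + 2 * l) * u) * (1 - v)) ((1 + s) * H)
  linarith

lemma evB_le {s u v : ℝ} (hs : s ∈ Ioo (0:ℝ) 1) (hu : u ∈ Icc (0:ℝ) 1)
    (hv : v ∈ Icc (0:ℝ) 1) : |evB s u v| ≤ 3 := by
  obtain ⟨s0, s1⟩ := hs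
  obtain ⟨u0, u1⟩ := hu
  obtain ⟨v0, v1⟩ := hv
  unfold evB
  rw [abs_mul, show (3:ℝ) = 1 * 3 by norm_num]
  refine mul_le_mul ?_ ?_ (abs_nonneg _) (by linarith)
  · rw [abs_le]; constructor <;> linarith
  · rw [abs_le]; constructor <;> nlinarith

/-- The regularized vector field in the variables `(X, Y, z)`. -/
noncomputable def evPsi (l : ℝ) (S G : ℝ → ℝ) (p : ℝ × ℝ × ℝ) : ℝ × ℝ × ℝ :=
  (p.1 * (1 - p.1) * evA l (S p.2.2) (evQ (S p.2.2) p.1) (evQ (S p.2.2) p.2.1),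
   p.2.1 * (1 - p.2.1) * evB (S p.2.2) (evQ (S p.2.2) p.1) (evQ (S p.2.2) p.2.1),
   -(G p.2.2 * evH (S p.2.2) (evQ (S p.2.2) p.1) (evQ (S p.2.2) p.2.1)))

/-- The regularized vector field in angular variables. -/
noncomputable def evTh (l : ℝ) (S G : ℝ → ℝ) (p : ℝ × ℝ × ℝ) : ℝ × ℝ × ℝ :=
  (Real.sin p.1 * Real.cos p.1 / 2 *
    evA l (S p.2.2) (evQ (S p.2.2) (Real.sin p.1 ^ 2)) (evQ (S p.2.2) (Real.sin p.2.1 ^ 2)),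
   Real.sin p.2.1 * Real.cos p.2.1 / 2 *
    evB (S p.2.2) (evQ (S p.2.2) (Real.sin p.1 ^ 2)) (evQ (S p.2.2) (Real.sin p.2.1 ^ 2)),
   -(G p.2.2 *
    evH (S p.2.2) (evQ (S p.2.2) (Real.sin p.1 ^ 2)) (evQ (S p.2.2) (Real.sin p.2.1 ^ 2))))

lemma ev_sin (x : ℝ) : Real.sin x ^ 2 ∈ Icc (0:ℝ) 1 := ⟨sq_nonneg _, Real.sin_sq_le_one x⟩

lemma evPsi_contDiffOn (l : ℝ) (S G : ℝ → ℝ) (hS : ContDiff ℝ 1 S) (hG : ContDiff ℝ 1 G)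
    (hS0 : ∀ z, S z ∈ Ioo (0:ℝ) 1) :
    ContDiffOn ℝ 1 (evPsi l S G) (Icc 0 1 ×ˢ Icc 0 1 ×ˢ univ) := by
  have h1 : ContDiffOn ℝ 1 (fun p : ℝ × ℝ × ℝ => evQ (S p.2.2) p.1)
      (Icc 0 1 ×ˢ Icc 0 1 ×ˢ univ) := by
    unfold evQ
    refine ContDiffOn.div (by fun_prop) (by fun_prop) fun p hp => (evden (hS0 _).1 hp.1).ne'
  have h2 : ContDiffOn ℝ 1 (fun p : ℝ × ℝ × ℝ => evQ (S p.2.2) p.2.1)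
      (Icc 0 1 ×ˢ Icc 0 1 ×ˢ univ) := by
    unfold evQ
    refine ContDiffOn.div (by fun_prop) (by fun_prop) fun p hp => (evden (hS0 _).1 hp.2.1).ne'
  unfold evPsi evA evB evH
  fun_prop

lemma evTh_contDiff (l : ℝ) (S G : ℝ → ℝ) (hS : ContDiff ℝ 1 S) (hG : ContDiff ℝ 1 G)
    (hS0 : ∀ z, S z ∈ Ioo (0:ℝ) 1) :
    ContDiff ℝ 1 (evTh l S G) := by
  have h1 : ContDiff ℝ 1 (fun p : ℝ × ℝ × ℝ => evQ (S p.2.2) (Real.sin p.1 ^ 2)) := by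
    unfold evQ
    refine ContDiff.div (by fun_prop) (by fun_prop) fun p => (evden (hS0 _).1 (ev_sin _)).ne'
  have h2 : ContDiff ℝ 1 (fun p : ℝ × ℝ × ℝ => evQ (S p.2.2) (Real.sin p.2.1 ^ 2)) := by
    unfold evQ
    refine ContDiff.div (by fun_prop) (by fun_prop) fun p => (evden (hS0 _).1 (ev_sin _)).ne'
  unfold evTh evA evB evH
  fun_prop

lemma evTh_bound (l : ℝ) (hl : -1 < l) (S G : ℝ → ℝ) (M : ℝ) (hG : ∀ z, |G z| ≤ M)
    (hS0 : ∀ z, S z ∈ Ioo (0:ℝ) 1) (p : ℝ × ℝ × ℝ) :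
    ‖evTh l S G p‖ ≤ max (7 + 2 * l) (max 3 M) := by
  have hu := evQ_mem (hS0 p.2.2).1 (ev_sin p.1)
  have hv := evQ_mem (hS0 p.2.2).1 (ev_sin p.2.1)
  have hA := evA_le hl (hS0 p.2.2) hu hv
  have hB := evB_le (hS0 p.2.2) hu hv
  have hH := evH_mem (hS0 p.2.2) hu hv
  have hsc : ∀ x : ℝ, |Real.sin x * Real.cos x / 2| ≤ 1 := by
    intro x
    rw [abs_le]
    constructor <;> nlinarith [sq_nonneg (Real.sin x + Real.cos x),
      sq_nonneg (Real.sin x - Real.cos x), Real.sin_sq_add_cos_sq x]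
  refine norm_prod_le_iff.2 ⟨le_max_of_le_left ?_, le_max_of_le_right
    (norm_prod_le_iff.2 ⟨le_max_of_le_left ?_, le_max_of_le_right ?_⟩)⟩
  · rw [evTh, Real.norm_eq_abs, abs_mul]
    calc _ ≤ 1 * (7 + 2 * l) := mul_le_mul (hsc _) hA (abs_nonneg _) zero_le_one
      _ = _ := one_mul _
  · rw [evTh, Real.norm_eq_abs, abs_mul]
    calc _ ≤ 1 * (3:ℝ) := mul_le_mul (hsc _) hB (abs_nonneg _) zero_le_one
      _ = _ := one_mul _
  · rw [evTh, Real.norm_eq_abs, abs_neg, abs_mul, abs_of_nonneg hH.1]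
    calc _ ≤ M * 1 := mul_le_mul (hG _) hH.2 hH.1 ((abs_nonneg _).trans (hG 0))
      _ = _ := mul_one _

/-- Solutions of the system written with `z = log ω`. -/
def EvSol (l : ℝ) (S q G : ℝ → ℝ) (U V z : ℝ → ℝ) : Prop :=
  (∀ t, U t ∈ Icc (0:ℝ) 1 ∧ V t ∈ Icc (0:ℝ) 1) ∧ ∀ t,
    HasDerivAt U (U t * (1 - U t) *
      (evA l (S (z t)) (U t) (V t) + q (z t) * evH (S (z t)) (U t) (V t))) t ∧
    HasDerivAt V (V t * (1 - V t) *
      (evB (S (z t)) (U t) (V t) + q (z t) * evH (S (z t)) (U t) (V t))) t ∧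
    HasDerivAt z (-(G (z t) * evH (S (z t)) (U t) (V t))) t

lemma ev_Sder {S q G z : ℝ → ℝ} {t h : ℝ} (hG : 0 < G (z t))
    (hSd : ∀ z, HasDerivAt S (q z * (S z / G z)) z) (hz : HasDerivAt z (-(G (z t) * h)) t) :
    HasDerivAt (fun t => S (z t)) (S (z t) * (-(q (z t) * h))) t := by
  refine ((hSd (z t)).comp t hz).congr_deriv ?_
  field_simp

lemma ev_core_exists (l : ℝ) (hl : -1 < l) (S q G : ℝ → ℝ) (M : ℝ)
    (hG0 : ∀ z, 0 < G z) (hG : ∀ z, G z ≤ M) (hS0 : ∀ z, S z ∈ Ioo (0:ℝ) 1)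
    (hS : ContDiff ℝ 1 S) (hG1 : ContDiff ℝ 1 G)
    (hSd : ∀ z, HasDerivAt S (q z * (S z / G z)) z)
    (U₀ V₀ z₀ : ℝ) (hU₀ : U₀ ∈ Icc (0:ℝ) 1) (hV₀ : V₀ ∈ Icc (0:ℝ) 1) :
    ∃ U V z : ℝ → ℝ, U 0 = U₀ ∧ V 0 = V₀ ∧ z 0 = z₀ ∧ EvSol l S q G U V z := by
  have hsin : ∀ x ∈ Icc (0:ℝ) 1, Real.sin (Real.arcsin (√x)) ^ 2 = x := by
    intro x hx
    rw [Real.sin_arcsin (by linarith [Real.sqrt_nonneg x]) (Real.sqrt_le_one.2 hx.2),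
      Real.sq_sqrt hx.1]
  obtain ⟨x, hx0, hx⟩ := ev_exists (evTh l S G) (evTh_contDiff l S G hS hG1 hS0) _
    (evTh_bound l hl S G M (fun z => by rw [abs_of_pos (hG0 z)]; exact hG z) hS0)
    (Real.arcsin (√(evQ (S z₀)⁻¹ U₀)), Real.arcsin (√(evQ (S z₀)⁻¹ V₀)), z₀)
  have hinv := fun z => inv_pos.2 (hS0 z).1
  have h1 : ∀ t, HasDerivAt (fun t => (x t).1) (evTh l S G (x t)).1 t := fun t =>
    (hasFDerivAt_fst (p := x t)).comp_hasDerivAt t (hx t)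
  have h2' : ∀ t, HasDerivAt (fun t => (x t).2) (evTh l S G (x t)).2 t := fun t =>
    (hasFDerivAt_snd (p := x t)).comp_hasDerivAt t (hx t)
  have h2 : ∀ t, HasDerivAt (fun t => (x t).2.1) (evTh l S G (x t)).2.1 t := fun t =>
    HasFDerivAt.comp_hasDerivAt (f := fun t => (x t).2) t (hasFDerivAt_fst (p := (x t).2)) (h2' t)
  have h3 : ∀ t, HasDerivAt (fun t => (x t).2.2) (evTh l S G (x t)).2.2 t := fun t =>
    HasFDerivAt.comp_hasDerivAt (f := fun t => (x t).2) t (hasFDerivAt_snd (p := (x t).2)) (h2' t)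
  have hsq : ∀ (y : ℝ → ℝ) (a t : ℝ), HasDerivAt y (Real.sin (y t) * Real.cos (y t) / 2 * a) t →
      HasDerivAt (fun t => Real.sin (y t) ^ 2)
        (Real.sin (y t) ^ 2 * (1 - Real.sin (y t) ^ 2) * a) t := by
    intro y a t hy
    refine ((hy.sin).pow 2).congr_deriv ?_
    rw [← Real.cos_sq']
    push_cast
    ring
  refine ⟨fun t => evQ (S (x t).2.2) (Real.sin (x t).1 ^ 2),
    fun t => evQ (S (x t).2.2) (Real.sin (x t).2.1 ^ 2), fun t => (x t).2.2, ?_, ?_, ?_, ?_, ?_⟩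
  · simp only [hx0]
    rw [hsin _ (evQ_mem (hinv _) hU₀), evQ_inv (hS0 _).1 hU₀]
  · simp only [hx0]
    rw [hsin _ (evQ_mem (hinv _) hV₀), evQ_inv (hS0 _).1 hV₀]
  · simp only [hx0]
  · exact fun t => ⟨evQ_mem (hS0 _).1 (ev_sin _), evQ_mem (hS0 _).1 (ev_sin _)⟩
  · intro t
    have hs := ev_Sder (z := fun t => (x t).2.2) (hG0 _) hSd (h3 t)
    have e1 := evQ_deriv (s := fun t => S (x t).2.2) (hS0 (x t).2.2).1 (ev_sin _) hs (hsq (fun t => (x t).1) _ t (h1 t))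
    have e2 := evQ_deriv (s := fun t => S (x t).2.2) (hS0 (x t).2.2).1 (ev_sin _) hs (hsq (fun t => (x t).2.1) _ t (h2 t))
    rw [sub_neg_eq_add] at e1 e2
    exact ⟨e1, e2, h3 t⟩

lemma ev_core_psi (l : ℝ) (S q G : ℝ → ℝ)
    (hG0 : ∀ z, 0 < G z) (hS0 : ∀ z, S z ∈ Ioo (0:ℝ) 1)
    (hSd : ∀ z, HasDerivAt S (q z * (S z / G z)) z)
    (U V z : ℝ → ℝ) (h : EvSol l S q G U V z) (t : ℝ) :
    HasDerivAt (fun t => (evQ (S (z t))⁻¹ (U t), evQ (S (z t))⁻¹ (V t), z t))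
      (evPsi l S G (evQ (S (z t))⁻¹ (U t), evQ (S (z t))⁻¹ (V t), z t)) t := by
  obtain ⟨hr, hd⟩ := h
  obtain ⟨d1, d2, d3⟩ := hd t
  have hs := ev_Sder (hG0 _) hSd d3
  have hne := (hS0 (z t)).1.ne'
  have hs' : HasDerivAt (fun t => (S (z t))⁻¹)
      ((S (z t))⁻¹ * (q (z t) * evH (S (z t)) (U t) (V t))) t := by
    refine (hs.inv hne).congr_deriv ?_
    field_simp
  have hp := inv_pos.2 (hS0 (z t)).1
  have e1 := evQ_deriv (s := fun t => (S (z t))⁻¹) hp (hr t).1 hs' d1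
  have e2 := evQ_deriv (s := fun t => (S (z t))⁻¹) hp (hr t).2 hs' d2
  rw [add_sub_cancel_right] at e1 e2
  unfold evPsi
  simp only [evQ_inv (hS0 (z t)).1 (hr t).1, evQ_inv (hS0 (z t)).1 (hr t).2]
  exact e1.prodMk (e2.prodMk d3)

lemma ev_core_unique (l : ℝ) (S q G : ℝ → ℝ)
    (hG0 : ∀ z, 0 < G z) (hS0 : ∀ z, S z ∈ Ioo (0:ℝ) 1)
    (hS : ContDiff ℝ 1 S) (hG1 : ContDiff ℝ 1 G)
    (hSd : ∀ z, HasDerivAt S (q z * (S z / G z)) z)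
    (U V z U' V' z' : ℝ → ℝ) (h : EvSol l S q G U V z) (h' : EvSol l S q G U' V' z')
    (hU : U' 0 = U 0) (hV : V' 0 = V 0) (hz : z' 0 = z 0) : U' = U ∧ V' = V ∧ z' = z := by
  have key : ∀ t, U' t = U t ∧ V' t = V t ∧ z' t = z t := by
    intro t
    have hinv := fun z => inv_pos.2 (hS0 z).1
    have := ev_unique (evPsi l S G) (Icc 0 1 ×ˢ Icc 0 1 ×ˢ univ)
      (isClosed_Icc.prod (isClosed_Icc.prod isClosed_univ))
      ((convex_Icc _ _).prod ((convex_Icc _ _).prod convex_univ))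
      (evPsi_contDiffOn l S G hS hG1 hS0) (|t| + 1) _ _
      (fun s _ => ⟨ev_core_psi l S q G hG0 hS0 hSd U' V' z' h' s,
        evQ_mem (hinv _) (h'.1 s).1, evQ_mem (hinv _) (h'.1 s).2, trivial⟩)
      (fun s _ => ⟨ev_core_psi l S q G hG0 hS0 hSd U V z h s,
        evQ_mem (hinv _) (h.1 s).1, evQ_mem (hinv _) (h.1 s).2, trivial⟩)
      (by simp only [hU, hV, hz])
    have := this (abs_lt.1 (lt_add_one |t|))
    simp only [Prod.mk.injEq] at this
    obtain ⟨a, b, c⟩ := this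
    rw [c] at a b
    refine ⟨?_, ?_, c⟩
    · rw [← evQ_inv (hS0 (z t)).1 (h'.1 t).1, a, evQ_inv (hS0 (z t)).1 (h.1 t).1]
    · rw [← evQ_inv (hS0 (z t)).1 (h'.1 t).2, b, evQ_inv (hS0 (z t)).1 (h.1 t).2]
  exact ⟨funext fun t => (key t).1, funext fun t => (key t).2.1, funext fun t => (key t).2.2⟩

/-- For every initial point `(U₀,V₀,Ω₀) ∈ [0,1]² × (0,1)` there is a unique global `C¹` solution of the Einstein–Vlasov dynamical system through it, taking values in `[0,1]² × (0,1)` for all `λ ∈ ℝ`. -/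
theorem stmt15
    (l : ℝ) (hl : -1 < l)
    (σ σ' : ℝ → ℝ)
    (hσderiv : ∀ η : ℝ, 0 < η → HasDerivAt σ (σ' η) η)
    (hσ'cont : ContinuousOn σ' (Ioi 0))
    (hσrange : ∀ η : ℝ, 0 < η → σ η ∈ Ioo 0 (1 / (3 + 2 * l)))
    (hσ0 : Tendsto σ (nhdsWithin 0 (Ioi 0)) (nhds 0))
    (k₁ k₂ : ℝ) (hk₁ : 0 < k₁) (hk₁₂ : k₁ < k₂)
    (hσ'near : ∃ η₀ > (0:ℝ), ∀ η ∈ Ioo (0:ℝ) η₀, σ' η ∈ Ioo k₁ k₂)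
    (ω ω' : ℝ → ℝ)
    (hωsmooth : ContDiffOn ℝ (⊤ : ℕ∞) ω (Ioi 0))
    (hωderiv : ∀ η : ℝ, 0 < η → HasDerivAt ω (ω' η) η)
    (hωpos : ∀ η : ℝ, 0 < η → 0 < ω η)
    (hωmono : StrictMonoOn ω (Ioi 0))
    (hω0 : Tendsto ω (nhdsWithin 0 (Ioi 0)) (nhds 0))
    (F : ℝ → ℝ) (hFdef : ∀ η : ℝ, 0 < η → F η = σ η * (ω' η / ω η))
    (Flo Fhi : ℝ) (hFlo : 0 < Flo)
    (hFbounds : ∀ η : ℝ, 0 < η → F η ∈ Icc Flo Fhi)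
    (hωsurj : ∀ y : ℝ, 0 < y → ∃ η : ℝ, 0 < η ∧ ω η = y)
    (σΩ σ'Ω FΩ : ℝ → ℝ)
    (hσΩ : ∀ η : ℝ, 0 < η → σΩ (ω η / (1 + ω η)) = σ η)
    (hσ'Ω : ∀ η : ℝ, 0 < η → σ'Ω (ω η / (1 + ω η)) = σ' η)
    (hFΩ : ∀ η : ℝ, 0 < η → FΩ (ω η / (1 + ω η)) = F η)
    (U₀ V₀ Ω₀ : ℝ) (hU₀ : U₀ ∈ Icc (0:ℝ) 1) (hV₀ : V₀ ∈ Icc (0:ℝ) 1)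
    (hΩ₀ : Ω₀ ∈ Ioo (0:ℝ) 1) :
    ∃ U V W : ℝ → ℝ,
      (U 0 = U₀ ∧ V 0 = V₀ ∧ W 0 = Ω₀) ∧
      (∀ t : ℝ, U t ∈ Icc (0:ℝ) 1 ∧ V t ∈ Icc (0:ℝ) 1 ∧ W t ∈ Ioo (0:ℝ) 1) ∧
      (∀ t : ℝ,
        HasDerivAt U (U t * (1 - U t) * ((3 + 2 * l - (4 + 2 * l) * U t) * (1 - V t)
          - (1 + σΩ (W t) - σ'Ω (W t)) * ((1 - U t + σΩ (W t) * U t) * V t))) t ∧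
        HasDerivAt V (V t * (1 - V t) * ((2 * U t - 1) * (1 - V t + 2 * σΩ (W t) * V t)
          + σ'Ω (W t) * ((1 - U t + σΩ (W t) * U t) * V t))) t ∧
        HasDerivAt W (-(W t * (1 - W t) * FΩ (W t) * ((1 - U t + σΩ (W t) * U t) * V t))) t) ∧
      ∀ U' V' W' : ℝ → ℝ,
        (U' 0 = U₀ ∧ V' 0 = V₀ ∧ W' 0 = Ω₀) →
        (∀ t : ℝ, U' t ∈ Icc (0:ℝ) 1 ∧ V' t ∈ Icc (0:ℝ) 1 ∧ W' t ∈ Ioo (0:ℝ) 1) →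
        (∀ t : ℝ,
          HasDerivAt U' (U' t * (1 - U' t) * ((3 + 2 * l - (4 + 2 * l) * U' t) * (1 - V' t)
            - (1 + σΩ (W' t) - σ'Ω (W' t)) * ((1 - U' t + σΩ (W' t) * U' t) * V' t))) t ∧
          HasDerivAt V' (V' t * (1 - V' t) * ((2 * U' t - 1) * (1 - V' t + 2 * σΩ (W' t) * V' t)
            + σ'Ω (W' t) * ((1 - U' t + σΩ (W' t) * U' t) * V' t))) t ∧
          HasDerivAt W' (-(W' t * (1 - W' t) * FΩ (W' t) * ((1 - U' t + σΩ (W' t) * U' t) * V' t))) t) →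
        (U' = U ∧ V' = V ∧ W' = W) := by
  obtain ⟨ψ, hψ, hS, hG1, hSd⟩ := ev_pre σ σ' ω ω' F hσderiv hσ'cont (fun η h => (hσrange η h).1)
    hωsmooth hωderiv hωpos hωmono hFdef (fun η h => hFlo.trans_le (hFbounds η h).1) hωsurj
  have hG0 : ∀ z, 0 < F (ψ z) := fun z => hFlo.trans_le (hFbounds _ (hψ z).1).1
  have hGM : ∀ z, F (ψ z) ≤ Fhi := fun z => (hFbounds _ (hψ z).1).2
  have hS0 : ∀ z, σ (ψ z) ∈ Ioo (0:ℝ) 1 := by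
    intro z
    obtain ⟨h1, h2⟩ := hσrange _ (hψ z).1
    refine ⟨h1, h2.trans ?_⟩
    rw [div_lt_one (by linarith)]
    linarith
  -- the logistic function
  have hden : ∀ z : ℝ, 0 < 1 + Real.exp z := fun z => by positivity
  have hg1 : ∀ z, σΩ (Real.exp z / (1 + Real.exp z)) = σ (ψ z) := fun z => by
    rw [← (hψ z).2]; exact hσΩ _ (hψ z).1
  have hg2 : ∀ z, σ'Ω (Real.exp z / (1 + Real.exp z)) = σ' (ψ z) := fun z => by
    rw [← (hψ z).2]; exact hσ'Ω _ (hψ z).1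
  have hg3 : ∀ z, FΩ (Real.exp z / (1 + Real.exp z)) = F (ψ z) := fun z => by
    rw [← (hψ z).2]; exact hFΩ _ (hψ z).1
  have hgm : ∀ z : ℝ, Real.exp z / (1 + Real.exp z) ∈ Ioo (0:ℝ) 1 := fun z =>
    ⟨by positivity, by rw [div_lt_one (hden z)]; linarith⟩
  have hgl : ∀ w ∈ Ioo (0:ℝ) 1, Real.exp (Real.log w - Real.log (1 - w)) /
      (1 + Real.exp (Real.log w - Real.log (1 - w))) = w := by
    intro w hw
    have h1 : 0 < 1 - w := by linarith [hw.2]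
    rw [Real.exp_sub, Real.exp_log hw.1, Real.exp_log h1]
    have h2 : 1 + w / (1 - w) = 1 / (1 - w) := by field_simp; ring
    rw [h2]
    field_simp
  obtain ⟨U, V, z, hU0, hV0, hz0, hr, hd⟩ := ev_core_exists l hl (fun z => σ (ψ z))
    (fun z => σ' (ψ z)) (fun z => F (ψ z)) Fhi hG0 hGM hS0 hS hG1 hSd U₀ V₀
    (Real.log Ω₀ - Real.log (1 - Ω₀)) hU₀ hV₀
  refine ⟨U, V, fun t => Real.exp (z t) / (1 + Real.exp (z t)), ⟨hU0, hV0, ?_⟩,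
    fun t => ⟨(hr t).1, (hr t).2, hgm _⟩, ?_, ?_⟩
  · simp only [hz0]
    exact hgl _ hΩ₀
  · intro t
    obtain ⟨d1, d2, d3⟩ := hd t
    simp only [hg1, hg2, hg3]
    refine ⟨d1.congr_deriv ?_, d2, ?_⟩
    · unfold evA evH
      ring
    · have := d3.exp.div (d3.exp.const_add 1) (hden (z t)).ne'
      refine this.congr_deriv ?_
      have hne := (hden (z t)).ne'
      unfold evH
      field_simp
      ring
  · rintro U' V' W' ⟨hU0', hV0', hW0'⟩ hr' hd'
    have hw : ∀ t, W' t = Real.exp (Real.log (W' t) - Real.log (1 - W' t)) /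
        (1 + Real.exp (Real.log (W' t) - Real.log (1 - W' t))) := fun t =>
      (hgl _ (hr' t).2.2).symm
    have e1 : ∀ t, σΩ (W' t) = σ (ψ (Real.log (W' t) - Real.log (1 - W' t))) := fun t => by
      rw [← hg1, ← hw t]
    have e2 : ∀ t, σ'Ω (W' t) = σ' (ψ (Real.log (W' t) - Real.log (1 - W' t))) := fun t => by
      rw [← hg2, ← hw t]
    have e3 : ∀ t, FΩ (W' t) = F (ψ (Real.log (W' t) - Real.log (1 - W' t))) := fun t => by
      rw [← hg3, ← hw t]
    have hsol : EvSol l (fun z => σ (ψ z)) (fun z => σ' (ψ z)) (fun z => F (ψ z)) U' V'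
        (fun t => Real.log (W' t) - Real.log (1 - W' t)) := by
      refine ⟨fun t => ⟨(hr' t).1, (hr' t).2.1⟩, fun t => ?_⟩
      obtain ⟨d1, d2, d3⟩ := hd' t
      have p1 := (hr' t).2.2.1
      have p2 : 0 < 1 - W' t := by linarith [(hr' t).2.2.2]
      simp only [← e1, ← e2, ← e3]
      refine ⟨d1.congr_deriv ?_, d2, ?_⟩
      · unfold evA evH
        ring
      · refine ((d3.log p1.ne').sub ((d3.const_sub 1).log p2.ne')).congr_deriv ?_
        unfold evH
        field_simp
        ring
    obtain ⟨a, b, c⟩ := ev_core_unique l (fun z => σ (ψ z)) (fun z => σ' (ψ z))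
      (fun z => F (ψ z)) hG0 hS0 hS hG1 hSd U V z U' V' _ ⟨hr, hd⟩ hsol (by rw [hU0', hU0])
      (by rw [hV0', hV0]) (by rw [hz0, hW0'])
    refine ⟨a, b, funext fun t => ?_⟩
    rw [← congrFun c t]
    exact hw t
end

section
/- Assume in addition that σ, σ' and F, regarded as functions of Ω, extend to C¹ functions on [0,δ) for some δ > 0, with σ(0) = 0, σ'(0) = σ'₀ for some 0 < σ'₀ < 2, and F(0) = F₀ > 0, so that the Einstein–Vlasov dynamical system extends to a C¹ system on [0,1]² × [0,1). Then the fixed point B₁ = (0, 1/(1+σ'₀), 0) attracts interior orbits — i.e., there exists an interior orbit (U,V,Ω)(λ) ∈ (0,1)³ with (U,V,Ω)(λ) → B₁ as λ → +∞ — if and only if σ'₀ < 1/(4+2l). -/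
open Filter Set

section ode
variable {E : Type*} [NormedAddCommGroup E] [NormedSpace ℝ E] [ProperSpace E]

lemma ode_ball {f : E → E} {M : ℝ} (hM : ∀ x, ‖f x‖ ≤ M) {T : ℝ} {x : ℝ → E}
    (hx : ∀ t ∈ Icc (-T) T, HasDerivWithinAt x (f (x t)) (Icc (-T) T) t)
    {t : ℝ} (ht : t ∈ Icc (-T) T) : x t ∈ Metric.closedBall (x 0) (M * T) := by
  have hT : 0 ≤ T := by linarith [ht.1, ht.2]
  have h0 : (0:ℝ) ∈ Icc (-T) T := ⟨by linarith, hT⟩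
  have := (convex_Icc (-T) T).norm_image_sub_le_of_norm_hasDerivWithin_le hx
    (fun y _ => hM (x y)) h0 ht
  rw [Metric.mem_closedBall, dist_eq_norm]
  refine this.trans ?_
  have hM0 : 0 ≤ M := (norm_nonneg _).trans (hM (x 0))
  have : ‖t - 0‖ ≤ T := by
    rw [sub_zero, Real.norm_eq_abs, abs_le]; exact ht
  exact mul_le_mul_of_nonneg_left this hM0

lemma ode_uniq {f : E → E} (hf : LocallyLipschitz f) {M : ℝ} (hM : ∀ x, ‖f x‖ ≤ M) {T : ℝ}
    (hT : 0 < T) {x y : ℝ → E}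
    (hx : ∀ t ∈ Icc (-T) T, HasDerivWithinAt x (f (x t)) (Icc (-T) T) t)
    (hy : ∀ t ∈ Icc (-T) T, HasDerivWithinAt y (f (y t)) (Icc (-T) T) t)
    (h0 : x 0 = y 0) : EqOn x y (Icc (-T) T) := by
  obtain ⟨K, hK⟩ := (hf.locallyLipschitzOn
    (s := Metric.closedBall (x 0) (M * T))).exists_lipschitzOnWith_of_compact
    (isCompact_closedBall _ _)
  refine ODE_solution_unique_of_mem_Icc (v := fun _ => f)
    (s := fun _ => Metric.closedBall (x 0) (M * T)) (K := K) (t₀ := 0) (fun _ _ => hK)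
    ⟨by linarith, hT⟩ (fun t ht => (hx t ht).continuousWithinAt) ?_ ?_
    (fun t ht => (hy t ht).continuousWithinAt) ?_ ?_ h0
  · intro t ht
    exact (hx t (Ioo_subset_Icc_self ht)).hasDerivAt (Icc_mem_nhds ht.1 ht.2)
  · intro t ht
    exact ode_ball hM hx (Ioo_subset_Icc_self ht)
  · intro t ht
    exact (hy t (Ioo_subset_Icc_self ht)).hasDerivAt (Icc_mem_nhds ht.1 ht.2)
  · intro t ht
    rw [h0]
    exact ode_ball hM hy (Ioo_subset_Icc_self ht)

lemma ode_exists_Icc {f : E → E} (hf : LocallyLipschitz f) {M : ℝ} (hM : ∀ x, ‖f x‖ ≤ M)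
    {T : ℝ} (hT : 0 < T) (x₀ : E) :
    ∃ x : ℝ → E, x 0 = x₀ ∧
      ∀ t ∈ Icc (-T) T, HasDerivWithinAt x (f (x t)) (Icc (-T) T) t := by
  have hM0 : 0 ≤ M := (norm_nonneg _).trans (hM x₀)
  obtain ⟨K, hK⟩ := (hf.locallyLipschitzOn
    (s := Metric.closedBall x₀ (M * T))).exists_lipschitzOnWith_of_compact
    (isCompact_closedBall _ _)
  have hpl : IsPicardLindelof (fun _ => f) (tmin := -T) (tmax := T)
      ⟨0, ⟨by linarith, hT.le⟩⟩ x₀ ⟨M * T, by positivity⟩ 0 ⟨M, hM0⟩ K := by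
    refine ⟨fun _ _ => hK, fun _ _ => continuousOn_const, fun _ _ x _ => hM x, ?_⟩
    simp only [sub_zero, zero_sub, neg_neg, max_self, NNReal.coe_zero]
    exact le_rfl
  obtain ⟨x, hx0, hx⟩ := hpl.exists_eq_forall_mem_Icc_hasDerivWithinAt₀
  exact ⟨x, hx0, hx⟩

lemma ode_exists {f : E → E} (hf : LocallyLipschitz f) {M : ℝ} (hM : ∀ x, ‖f x‖ ≤ M) (x₀ : E) :
    ∃ x : ℝ → E, x 0 = x₀ ∧ ∀ t, HasDerivAt x (f (x t)) t := by
  have hn : ∀ n : ℕ, (0:ℝ) < n + 1 := fun n => by positivity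
  choose α h0 hα using fun n : ℕ => ode_exists_Icc hf hM (hn n) x₀
  have key : ∀ n m : ℕ, n ≤ m → EqOn (α n) (α m) (Icc (-(n+1:ℝ)) (n+1)) := by
    intro n m hnm
    refine ode_uniq hf hM (hn n) (hα n) ?_ (by rw [h0, h0])
    have hnm' : (n:ℝ) ≤ m := by exact_mod_cast hnm
    have hsub : Icc (-(n+1:ℝ)) (n+1) ⊆ Icc (-(m+1:ℝ)) (m+1) :=
      Icc_subset_Icc (by linarith) (by linarith)
    intro t ht
    exact (hα m t (hsub ht)).mono hsub
  let x : ℝ → E := fun t => α ⌈|t|⌉₊ t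
  have hx : ∀ n : ℕ, ∀ t : ℝ, |t| ≤ n → x t = α n t := by
    intro n t ht
    refine key _ n (Nat.ceil_le.2 ht) ?_
    have := Nat.le_ceil |t|
    exact abs_le.1 (by linarith)
  refine ⟨x, ?_, ?_⟩
  · rw [hx 0 0 (by simp), h0]
  · intro t
    obtain ⟨n, hn'⟩ := exists_nat_gt |t|
    have hev : x =ᶠ[nhds t] α n := by
      have : ∀ᶠ s : ℝ in nhds t, |s| < (n:ℝ) := continuous_abs.continuousAt.eventually_lt_const hn'
      filter_upwards [this] with s hs
      exact hx n s hs.le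
    have hlt := abs_lt.1 hn'
    have := (hα n t ⟨by linarith [hlt.1], by linarith [hlt.2]⟩).hasDerivAt
      (Icc_mem_nhds (by linarith [hlt.1]) (by linarith [hlt.2]))
    rw [← hx n t hn'.le] at this
    exact this.congr_of_eventuallyEq hev

/-- continuous dependence on initial data along a family of solutions -/
lemma ode_cont {f : E → E} (hf : LocallyLipschitz f) {M : ℝ} (hM : ∀ x, ‖f x‖ ≤ M)
    {φ : E → ℝ → E} (h0 : ∀ x, φ x 0 = x) (hφ : ∀ x t, HasDerivAt (φ x) (f (φ x t)) t)
    {t : ℝ} (ht : 0 ≤ t) : Continuous fun x => φ x t := by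
  have hM0 : 0 ≤ M := (norm_nonneg _).trans (hM 0)
  rw [continuous_iff_continuousAt]
  intro x₀
  obtain ⟨K, hK⟩ := (hf.locallyLipschitzOn
    (s := Metric.closedBall x₀ (M * t + 1))).exists_lipschitzOnWith_of_compact
    (isCompact_closedBall _ _)
  have hin : ∀ x ∈ Metric.closedBall x₀ 1, ∀ s ∈ Ico 0 t,
      φ x s ∈ Metric.closedBall x₀ (M * t + 1) := by
    intro x hx s hs
    have h1 := ode_ball (T := t) hM (x := φ x) (fun s _ => (hφ x s).hasDerivWithinAt)
      (t := s) ⟨by linarith [hs.1], hs.2.le⟩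
    rw [h0] at h1
    rw [Metric.mem_closedBall] at *
    linarith [dist_triangle (φ x s) x x₀]
  have hx₀ : x₀ ∈ Metric.closedBall x₀ 1 := Metric.mem_closedBall_self (by norm_num)
  have hd : ∀ x ∈ Metric.closedBall x₀ 1, dist (φ x t) (φ x₀ t) ≤ dist x x₀ * Real.exp (K * t) := by
    intro x hx
    have := dist_le_of_trajectories_ODE_of_mem (v := fun _ => f) (a := 0) (b := t) (K := K)
      (s := fun _ => Metric.closedBall x₀ (M * t + 1)) (f := φ x) (g := φ x₀) (δ := dist x x₀)
      (fun _ _ => hK) (fun s _ => (hφ x s).continuousAt.continuousWithinAt)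
      (fun s _ => (hφ x s).hasDerivWithinAt) (hin x hx)
      (fun s _ => (hφ x₀ s).continuousAt.continuousWithinAt)
      (fun s _ => (hφ x₀ s).hasDerivWithinAt) (hin x₀ hx₀) (by rw [h0, h0]) t ⟨ht, le_rfl⟩
    simpa using this
  rw [ContinuousAt, tendsto_iff_dist_tendsto_zero]
  have hlim : Tendsto (fun x => dist x x₀ * Real.exp (K * t)) (nhds x₀) (nhds 0) := by
    have : Continuous (fun x => dist x x₀ * Real.exp (K * t)) := by fun_prop
    simpa using this.tendsto x₀
  refine squeeze_zero' (Eventually.of_forall fun _ => dist_nonneg) ?_ hlim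
  filter_upwards [Metric.closedBall_mem_nhds x₀ one_pos] with x hx using hd x hx

/-- forward uniqueness -/
lemma ode_uniq_right {f : E → E} (hf : LocallyLipschitz f)
    {x y : ℝ → E} (hx : ∀ t, 0 ≤ t → HasDerivAt x (f (x t)) t)
    (hy : ∀ t, HasDerivAt y (f (y t)) t) (h0 : x 0 = y 0) {t : ℝ} (ht : 0 ≤ t) : x t = y t := by
  have hc : IsCompact ((x '' Icc 0 t) ∪ (y '' Icc 0 t)) :=
    (isCompact_Icc.image_of_continuousOn
      (fun s hs => (hx s hs.1).continuousAt.continuousWithinAt)).union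
    (isCompact_Icc.image_of_continuousOn
      (fun s hs => (hy s).continuousAt.continuousWithinAt))
  obtain ⟨K, hK⟩ := (hf.locallyLipschitzOn).exists_lipschitzOnWith_of_compact hc
  exact ODE_solution_unique_of_mem_Icc_right (v := fun _ => f) (K := K)
    (s := fun _ => (x '' Icc 0 t) ∪ (y '' Icc 0 t)) (fun _ _ => hK)
    (fun s hs => (hx s hs.1).continuousAt.continuousWithinAt)
    (fun s hs => (hx s hs.1).hasDerivWithinAt)
    (fun s hs => Or.inl ⟨s, ⟨hs.1, hs.2.le⟩, rfl⟩)
    (fun s hs => (hy s).continuousAt.continuousWithinAt)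
    (fun s hs => (hy s).hasDerivWithinAt)
    (fun s hs => Or.inr ⟨s, ⟨hs.1, hs.2.le⟩, rfl⟩) h0 ⟨ht, le_rfl⟩

end ode


lemma lin_decay {w w' : ℝ → ℝ} {T c : ℝ} (hw : ∀ t, HasDerivAt w (w' t) t)
    (hc : ∀ t, T ≤ t → w' t ≤ -c) {t : ℝ} (ht : T ≤ t) : w t ≤ w T - c * (t - T) := by
  have hd : ∀ t, HasDerivAt (fun t => w t + c * t) (w' t + c * 1) t :=
    fun t => (hw t).add ((hasDerivAt_id t).const_mul c)
  have : AntitoneOn (fun t => w t + c * t) (Ici T) := by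
    refine antitoneOn_of_deriv_nonpos (convex_Ici T)
      (fun t _ => (hd t).continuousAt.continuousWithinAt)
      (fun t _ => (hd t).differentiableAt.differentiableWithinAt) ?_
    intro x hx
    rw [interior_Ici] at hx
    rw [(hd x).deriv]
    linarith [hc x (le_of_lt hx)]
  have := this self_mem_Ici ht ht
  simp only at this
  linarith

lemma barrier_up {w w' : ℝ → ℝ} {T b : ℝ} (hw : ∀ t, HasDerivAt w (w' t) t)
    (hb : ∀ t, T ≤ t → b ≤ w t → 0 < w' t) {t₁ t : ℝ} (hT : T ≤ t₁) (h1 : b ≤ w t₁)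
    (ht : t₁ ≤ t) : b ≤ w t := by
  have := image_le_of_deriv_right_lt_deriv_boundary' (f := fun t => - w t) (f' := fun t => - w' t)
    (a := t₁) (b := t) (B := fun _ => -b) (B' := fun _ => 0)
    (fun x _ => (hw x).neg.continuousAt.continuousWithinAt)
    (fun x _ => (hw x).neg.hasDerivWithinAt) (by simpa using h1) continuousOn_const
    (fun x _ => hasDerivWithinAt_const _ _ _)
    (fun x hx he => by
      have := hb x (hT.trans hx.1) (by linarith)
      linarith) (x := t) ⟨ht, le_rfl⟩
  simpa using this

lemma barrier_down {w w' : ℝ → ℝ} {T b : ℝ} (hw : ∀ t, HasDerivAt w (w' t) t)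
    (hb : ∀ t, T ≤ t → w t ≤ b → w' t < 0) {t₁ t : ℝ} (hT : T ≤ t₁) (h1 : w t₁ ≤ b)
    (ht : t₁ ≤ t) : w t ≤ b := by
  have := barrier_up (w := fun t => - w t) (w' := fun t => - w' t) (T := T) (b := -b)
    (fun t => (hw t).neg) (fun t h h' => by linarith [hb t h (by linarith)]) hT
    (by linarith) ht
  linarith

lemma escape_up {w w' : ℝ → ℝ} {T b c B : ℝ} (hw : ∀ t, HasDerivAt w (w' t) t) (hc : 0 < c)
    (hb : ∀ t, T ≤ t → b ≤ w t → c ≤ w' t) (hB : ∀ t, T ≤ t → w t ≤ B)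
    {t : ℝ} (ht : T ≤ t) : w t ≤ b := by
  by_contra h
  push Not at h
  have h1 : ∀ r, t ≤ r → b ≤ w r := fun r hr =>
    barrier_up hw (fun t h h' => hc.trans_le (hb t h h')) ht h.le hr
  have h2 : ∀ r, t ≤ r → - w r ≤ - w t - c * (r - t) := fun r hr =>
    lin_decay (w := fun t => - w t) (w' := fun t => - w' t) (fun t => (hw t).neg)
      (fun r hr => by linarith [hb r (ht.trans hr) (h1 r hr)]) hr
  have hBt := hB t ht
  have hr : t ≤ t + (B - w t + 1) / c := by
    have : 0 ≤ (B - w t + 1) / c := div_nonneg (by linarith) hc.le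
    linarith
  have h3 := h2 _ hr
  have h4 := hB _ (ht.trans hr)
  have : c * (t + (B - w t + 1) / c - t) = B - w t + 1 := by field_simp; ring
  linarith

lemma escape_down {w w' : ℝ → ℝ} {T b c B : ℝ} (hw : ∀ t, HasDerivAt w (w' t) t) (hc : 0 < c)
    (hb : ∀ t, T ≤ t → w t ≤ b → w' t ≤ -c) (hB : ∀ t, T ≤ t → B ≤ w t)
    {t : ℝ} (ht : T ≤ t) : b ≤ w t := by
  have := escape_up (w := fun t => - w t) (w' := fun t => - w' t) (b := -b) (B := -B)
    (fun t => (hw t).neg) hc (fun t h h' => by linarith [hb t h (by linarith)])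
    (fun t h => by linarith [hB t h]) ht
  linarith

lemma est_v {s κ τ u v σ p : ℝ} (hs : 0 < s) (hs2 : s < 2) (hκ : 0 < κ) (hτ : 40 * τ ≤ κ)
    (hτ1 : τ ≤ 1) (u0 : 0 ≤ u) (u1 : u ≤ τ) (v0 : 0 ≤ v) (v1 : v ≤ 1) (s0 : 0 ≤ σ) (s1 : σ ≤ τ)
    (hp : |p - s| ≤ τ) :
    (1 / (1 + s) + κ ≤ v →
      κ / 2 ≤ (2 * u - 1) * (1 - v + 2 * σ * v) + p * ((1 - u + σ * u) * v)) ∧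
    (v ≤ 1 / (1 + s) - κ →
      (2 * u - 1) * (1 - v + 2 * σ * v) + p * ((1 - u + σ * u) * v) ≤ - (κ / 2)) := by
  have hid : (2 * u - 1) * (1 - v + 2 * σ * v) + p * ((1 - u + σ * u) * v)
      = (1 + s) * (v - 1 / (1 + s)) + (2 * u * (1 - v + 2 * σ * v) - 2 * (σ * v)
        + (p - s) * ((1 - u + σ * u) * v) - s * ((1 - σ) * (u * v))) := by
    field_simp; ring
  obtain ⟨p0, p1⟩ := abs_le.1 hp
  have hσv0 : 0 ≤ σ * v := by positivity
  have hσv : σ * v ≤ τ := by nlinarith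
  have a1 : 2 * u * (1 - v + 2 * σ * v) ≤ 6 * τ := by
    have : 1 - v + 2 * σ * v ≤ 3 := by nlinarith
    nlinarith
  have a2 : 0 ≤ 2 * u * (1 - v + 2 * σ * v) := by
    apply mul_nonneg (by linarith); nlinarith
  have hH0 : 0 ≤ (1 - u + σ * u) * v := by
    apply mul_nonneg _ v0; nlinarith
  have hH1 : (1 - u + σ * u) * v ≤ 1 := by
    have : 1 - u + σ * u ≤ 1 := by nlinarith
    nlinarith
  have a3 : |(p - s) * ((1 - u + σ * u) * v)| ≤ τ := by
    rw [abs_mul, abs_of_nonneg hH0]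
    exact (mul_le_of_le_one_right (abs_nonneg _) hH1).trans hp
  obtain ⟨a4, a5⟩ := abs_le.1 a3
  have huv0 : 0 ≤ u * v := by positivity
  have huv : u * v ≤ τ := by nlinarith
  have a6 : 0 ≤ (1 - σ) * (u * v) := mul_nonneg (by linarith) huv0
  have a7 : (1 - σ) * (u * v) ≤ τ := by nlinarith
  have a8 : s * ((1 - σ) * (u * v)) ≤ 2 * τ := by nlinarith
  have a9 : 0 ≤ s * ((1 - σ) * (u * v)) := by positivity
  rw [hid]
  constructor
  · intro h
    have : κ ≤ (1 + s) * (v - 1 / (1 + s)) := by nlinarith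
    linarith
  · intro h
    have : (1 + s) * (v - 1 / (1 + s)) ≤ -κ := by nlinarith
    linarith

lemma est_u {l s κ τ c u v σ p : ℝ} (hl : -1 < l) (hs : 0 < s) (hs2 : s < 1)
    (hc : 2 * c = (1 - (4 + 2 * l) * s) / (1 + s)) (hκ : (4 + 2 * l) * κ ≤ c / 2) (hκ0 : 0 < κ)
    (hτ : 10 * τ ≤ c)
    (hτ1 : τ ≤ 1) (u0 : 0 ≤ u) (u1 : u ≤ τ) (v0 : 0 ≤ v) (v1 : v ≤ 1) (s0 : 0 ≤ σ) (s1 : σ ≤ τ)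
    (hp : |p - s| ≤ τ) (h : 1 / (1 + s) - κ ≤ v) :
    (3 + 2 * l - (4 + 2 * l) * u) * (1 - v) - (1 + σ - p) * ((1 - u + σ * u) * v) ≤ -c := by
  obtain ⟨p0, p1⟩ := abs_le.1 hp
  obtain ⟨H, hH⟩ : ∃ H, H = (1 - u + σ * u) * v := ⟨_, rfl⟩
  rw [← hH]
  have hH0 : 0 ≤ H := by
    rw [hH]; apply mul_nonneg _ v0; nlinarith
  have hH1 : H ≤ 1 := by
    rw [hH]
    have : 1 - u + σ * u ≤ 1 := by nlinarith
    nlinarith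
  have hHv : v - τ ≤ H := by
    rw [hH]
    have h1 : u * v ≤ τ := by nlinarith
    have : 0 ≤ σ * u * v := by positivity
    linarith
  have a1 : 0 ≤ (4 + 2 * l) * u * (1 - v) := by
    apply mul_nonneg (mul_nonneg (by linarith) u0); linarith
  have a2 : (p - s - σ) * H ≤ τ := by nlinarith
  have a3 : (1 - s) * (v - τ) ≤ (1 - s) * H := mul_le_mul_of_nonneg_left hHv (by linarith)
  have a4 : (1 - s) * τ ≤ τ := by nlinarith
  have a5 : (4 + 2 * l - s) * (1 / (1 + s) - κ) ≤ (4 + 2 * l - s) * v :=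
    mul_le_mul_of_nonneg_left h (by linarith)
  have a6 : (3 + 2 * l) - (4 + 2 * l - s) * (1 / (1 + s)) = - (2 * c) := by
    rw [hc]; field_simp; ring
  have a7 : 0 ≤ s * κ := by positivity
  nlinarith

noncomputable def fldN (l S R U V : ℝ) : ℝ × ℝ × ℝ :=
  ((3 + 2 * l - (4 + 2 * l) * U) * (1 - V) - (1 + S) * ((1 - U + S * U) * V),
   (2 * U - 1) * (1 - V + 2 * S * V),
   -(R * ((1 - U + S * U) * V)))

noncomputable def fld (l : ℝ) (S G R : ℝ → ℝ) (x : ℝ × ℝ × ℝ) : ℝ × ℝ × ℝ :=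
  fldN l (S x.2.2) (R x.2.2) (Real.sigmoid (x.1 - G x.2.2)) (Real.sigmoid (x.2.1 - G x.2.2))

noncomputable def clampf (G : ℝ → ℝ) (m : ℝ) (x : ℝ × ℝ × ℝ) : ℝ × ℝ × ℝ :=
  (min x.1 (G x.2.2 + m), x.2)

lemma contDiff_sig : ContDiff ℝ 1 Real.sigmoid := contDiff_sigmoid.of_le le_top

lemma fld_contDiff (l : ℝ) {S G R : ℝ → ℝ} (hS : ContDiff ℝ 1 S) (hG : ContDiff ℝ 1 G)
    (hR : ContDiff ℝ 1 R) : ContDiff ℝ 1 (fld l S G R) := by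
  have h1 : ContDiff ℝ 1 (fun x : ℝ × ℝ × ℝ => Real.sigmoid (x.1 - G x.2.2)) :=
    contDiff_sig.comp (by fun_prop)
  have h2 : ContDiff ℝ 1 (fun x : ℝ × ℝ × ℝ => Real.sigmoid (x.2.1 - G x.2.2)) :=
    contDiff_sig.comp (by fun_prop)
  have h3 : ContDiff ℝ 1 (fun x : ℝ × ℝ × ℝ => S x.2.2) := hS.comp (by fun_prop)
  have h4 : ContDiff ℝ 1 (fun x : ℝ × ℝ × ℝ => R x.2.2) := hR.comp (by fun_prop)
  unfold fld fldN
  fun_prop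

lemma clampf_lip {G : ℝ → ℝ} (hG : ContDiff ℝ 1 G) (m : ℝ) : LocallyLipschitz (clampf G m) := by
  have h1 : LocallyLipschitz (fun x : ℝ × ℝ × ℝ => x.1) :=
    ContDiff.locallyLipschitz (𝕂 := ℝ) (by fun_prop)
  have h2 : LocallyLipschitz (fun x : ℝ × ℝ × ℝ => G x.2.2 + m) :=
    ContDiff.locallyLipschitz (𝕂 := ℝ) ((hG.comp (by fun_prop)).add contDiff_const)
  have h3 : LocallyLipschitz (fun x : ℝ × ℝ × ℝ => x.2) :=
    ContDiff.locallyLipschitz (𝕂 := ℝ) (by fun_prop)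
  exact (h1.min h2).prodMk h3

lemma fld_bound {l : ℝ} (hl : -1 < l) {S G R : ℝ → ℝ} {C : ℝ} (hS0 : ∀ z, 0 < S z)
    (hS1 : ∀ z, S z ≤ 1) (hR0 : ∀ z, 0 < R z) (hR1 : ∀ z, R z ≤ C) (x : ℝ × ℝ × ℝ) :
    ‖fld l S G R x‖ ≤ 9 + 4 * |l| + C := by
  have := (hR0 0).trans_le (hR1 0)
  have hl' := abs_nonneg l
  have hl2 := le_abs_self l
  have u0 := Real.sigmoid_pos (x.1 - G x.2.2)
  have u1 := Real.sigmoid_lt_one (x.1 - G x.2.2)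
  have v0 := Real.sigmoid_pos (x.2.1 - G x.2.2)
  have v1 := Real.sigmoid_lt_one (x.2.1 - G x.2.2)
  have s0 := hS0 x.2.2
  have s1 := hS1 x.2.2
  have r0 := hR0 x.2.2
  have r1 := hR1 x.2.2
  unfold fld
  generalize Real.sigmoid (x.1 - G x.2.2) = U at *
  generalize Real.sigmoid (x.2.1 - G x.2.2) = V at *
  generalize S x.2.2 = σ at *
  generalize R x.2.2 = r at *
  have hHa : 0 ≤ 1 - U + σ * U := by nlinarith
  have hHb : 1 - U + σ * U ≤ 1 := by nlinarith
  have hH0 : 0 ≤ (1 - U + σ * U) * V := by positivity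
  have hH1 : (1 - U + σ * U) * V ≤ 1 := by nlinarith
  have hσV : 0 ≤ σ * V := by positivity
  have hσV1 : σ * V ≤ 1 := by nlinarith
  unfold fldN
  generalize (1 - U + σ * U) * V = H at *
  rw [norm_prod_le_iff, norm_prod_le_iff]
  simp only [Real.norm_eq_abs]
  refine ⟨?_, ?_, ?_⟩
  · have a1 : (3 + 2 * l - (4 + 2 * l) * U) * (1 - V) ≤ 3 + 2 * l := by
      have : 0 ≤ (4 + 2 * l) * U * (1 - V) :=
        mul_nonneg (mul_nonneg (by linarith) u0.le) (by linarith)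
      nlinarith
    have a2 : -(4 + 2 * l) ≤ (3 + 2 * l - (4 + 2 * l) * U) * (1 - V) := by
      have h1 : (4 + 2 * l) * (U * (1 - V)) ≤ (4 + 2 * l) * 1 := by
        apply mul_le_mul_of_nonneg_left _ (by linarith)
        nlinarith
      have : 0 ≤ (3 + 2 * l) * (1 - V) := mul_nonneg (by linarith) (by linarith)
      nlinarith
    have a3 : 0 ≤ (1 + σ) * H := by positivity
    have a4 : (1 + σ) * H ≤ 2 := by nlinarith
    rw [abs_le]; constructor <;> linarith
  · rw [abs_mul]
    have a1 : |2 * U - 1| ≤ 1 := by rw [abs_le]; constructor <;> linarith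
    have a2 : |1 - V + 2 * σ * V| ≤ 3 := by rw [abs_le]; constructor <;> nlinarith
    have := mul_le_mul a1 a2 (abs_nonneg _) (by norm_num)
    linarith
  · rw [abs_neg, abs_of_nonneg (by positivity)]
    have : r * H ≤ C := (mul_le_of_le_one_right r0.le hH1).trans r1
    linarith

/-- from `(p,q,z)` to `(u,v)` -/
lemma uv_deriv {l : ℝ} {S G R P : ℝ → ℝ} (hG : ∀ z, HasDerivAt G (P z / R z) z)
    (hR : ∀ z, 0 < R z) {x : ℝ → ℝ × ℝ × ℝ} {t Uc : ℝ}
    (hx : HasDerivAt x (fldN l (S (x t).2.2) (R (x t).2.2) Uc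
      (Real.sigmoid ((x t).2.1 - G (x t).2.2))) t) :
    HasDerivAt (fun t => (x t).1 - G (x t).2.2)
      ((3 + 2 * l - (4 + 2 * l) * Uc) * (1 - Real.sigmoid ((x t).2.1 - G (x t).2.2))
        - (1 + S (x t).2.2 - P (x t).2.2) * ((1 - Uc + S (x t).2.2 * Uc)
          * Real.sigmoid ((x t).2.1 - G (x t).2.2))) t ∧
    HasDerivAt (fun t => (x t).2.1 - G (x t).2.2)
      ((2 * Uc - 1) * (1 - Real.sigmoid ((x t).2.1 - G (x t).2.2)
          + 2 * S (x t).2.2 * Real.sigmoid ((x t).2.1 - G (x t).2.2))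
        + P (x t).2.2 * ((1 - Uc + S (x t).2.2 * Uc)
          * Real.sigmoid ((x t).2.1 - G (x t).2.2))) t ∧
    HasDerivAt (fun t => (x t).2.2)
      (-(R (x t).2.2 * ((1 - Uc + S (x t).2.2 * Uc)
          * Real.sigmoid ((x t).2.1 - G (x t).2.2)))) t := by
  have hp : HasDerivAt (fun t => (x t).1) _ t := hx.fst
  have hq : HasDerivAt (fun t => (x t).2.1) _ t := hx.snd.fst
  have hz : HasDerivAt (fun t => (x t).2.2) _ t := hx.snd.snd
  have hGz := (hG (x t).2.2).comp t hz
  have hr := (hR (x t).2.2).ne'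
  refine ⟨(hp.sub hGz).congr_deriv ?_, (hq.sub hGz).congr_deriv ?_, hz⟩
  · simp only [fldN]; field_simp; ring
  · simp only [fldN]; field_simp; ring

lemma bwd_core {l s C k : ℝ} (hl : -1 < l) (hs : 0 < s) (hs4 : s < 1 / (4 + 2 * l))
    {S G R P : ℝ → ℝ} (cS : ContDiff ℝ 1 S) (cG : ContDiff ℝ 1 G) (cR : ContDiff ℝ 1 R)
    (hG : ∀ z, HasDerivAt G (P z / R z) z)
    (hS0 : ∀ z, 0 < S z) (hS1 : ∀ z, S z ≤ 1) (hR0 : ∀ z, 0 < R z) (hR1 : ∀ z, R z ≤ C)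
    (hk : 0 < k) (hRk : ∀ᶠ z in atBot, k ≤ R z)
    (lS : Tendsto S atBot (nhds 0)) (lP : Tendsto P atBot (nhds s)) :
    ∃ x : ℝ → ℝ × ℝ × ℝ, (∀ t, HasDerivAt x (fld l S G R (x t)) t) ∧
      Tendsto (fun t => Real.sigmoid ((x t).1 - G (x t).2.2)) atTop (nhds 0) ∧
      Tendsto (fun t => Real.sigmoid ((x t).2.1 - G (x t).2.2)) atTop (nhds (1 / (1 + s))) ∧
      Tendsto (fun t => (x t).2.2) atTop atBot := by
  have hl4 : 0 < 4 + 2 * l := by linarith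
  have hs4' : s * (4 + 2 * l) < 1 := by rwa [lt_div_iff₀ hl4] at hs4
  have hs1 : s < 1 := by nlinarith
  obtain ⟨c, hc⟩ : ∃ c, 2 * c = (1 - (4 + 2 * l) * s) / (1 + s) := ⟨_, mul_div_cancel₀ _ two_ne_zero⟩
  have hc0 : 0 < c := by
    have : 0 < (1 - (4 + 2 * l) * s) / (1 + s) := div_pos (by linarith) (by linarith)
    linarith
  have hV0 : 0 < 1 / (1 + s) := by positivity
  have hV1 : 1 / (1 + s) < 1 := by rw [div_lt_one (by positivity)]; linarith
  set V0 := 1 / (1 + s) with hV0def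
  obtain ⟨κ, hκ0, hκ1, hκ2, hκ3⟩ : ∃ κ, 0 < κ ∧ (4 + 2 * l) * κ ≤ c / 2 ∧ κ ≤ V0 / 2 ∧
      κ ≤ (1 - V0) / 2 := by
    refine ⟨min (c / (2 * (4 + 2 * l))) (min (V0 / 2) ((1 - V0) / 2)), ?_, ?_, ?_, ?_⟩
    · exact lt_min (by positivity) (lt_min (by linarith) (by linarith))
    · calc _ ≤ (4 + 2 * l) * (c / (2 * (4 + 2 * l))) :=
            mul_le_mul_of_nonneg_left (min_le_left _ _) hl4.le
        _ = c / 2 := by field_simp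
    · exact (min_le_right _ _).trans (min_le_left _ _)
    · exact (min_le_right _ _).trans (min_le_right _ _)
  obtain ⟨τ, hτ0, hτ1, hτ2, hτ3⟩ : ∃ τ, 0 < τ ∧ 40 * τ ≤ κ ∧ 10 * τ ≤ c ∧ τ ≤ 1 / 2 := by
    refine ⟨min (κ / 40) (min (c / 10) (1 / 2)), ?_, ?_, ?_, ?_⟩
    · exact lt_min (by positivity) (lt_min (by positivity) (by norm_num))
    · linarith [min_le_left (κ / 40) (min (c / 10) (1 / 2))]
    · linarith [(min_le_right (κ / 40) (min (c / 10) (1 / 2))).trans (min_le_left _ _)]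
    · exact (min_le_right _ _).trans (min_le_right _ _)
  obtain ⟨m, hm⟩ : ∃ m, Real.sigmoid m = τ := by
    have : τ ∈ range Real.sigmoid := by rw [Real.range_sigmoid]; constructor <;> linarith
    exact this
  obtain ⟨vp, hvp⟩ : ∃ m, Real.sigmoid m = V0 + κ := by
    have : V0 + κ ∈ range Real.sigmoid := by rw [Real.range_sigmoid]; constructor <;> linarith
    exact this
  obtain ⟨vm, hvm⟩ : ∃ m, Real.sigmoid m = V0 - κ := by
    have : V0 - κ ∈ range Real.sigmoid := by rw [Real.range_sigmoid]; constructor <;> linarith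
    exact this
  have hvmp : vm < vp := by
    rw [← Real.sigmoid_lt_iff, hvp, hvm]; linarith
  -- smallness in z
  have hsm : ∀ τ' > 0, ∀ᶠ z in atBot, S z ≤ τ' ∧ |P z - s| ≤ τ' := by
    intro τ' hτ'
    have e1 := lS.eventually_lt_const hτ'
    have e2 := (Metric.tendsto_nhds.1 lP) τ' hτ'
    filter_upwards [e1, e2] with z h1 h2
    exact ⟨h1.le, by rw [Real.dist_eq] at h2; exact h2.le⟩
  obtain ⟨z0, hz0⟩ := eventually_atBot.1 ((hsm τ hτ0).and hRk)
  -- clamped flow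
  have cf := fld_contDiff l cS cG cR
  have lf : LocallyLipschitz (fld l S G R) := cf.locallyLipschitz
  have lfc : LocallyLipschitz (fld l S G R ∘ clampf G m) := lf.comp (clampf_lip cG m)
  have bf := fld_bound (G := G) hl hS0 hS1 hR0 hR1
  have bfc : ∀ x, ‖(fld l S G R ∘ clampf G m) x‖ ≤ 9 + 4 * |l| + C := fun x => bf _
  choose φ hφ0 hφ using fun x => ode_exists lfc bfc x
  have hclamp : ∀ x, (fld l S G R ∘ clampf G m) x = fldN l (S x.2.2) (R x.2.2)
      (Real.sigmoid (min (x.1 - G x.2.2) m)) (Real.sigmoid (x.2.1 - G x.2.2)) := by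
    intro x
    simp only [Function.comp, fld, clampf]
    rw [← min_sub_sub_right, add_sub_cancel_left]
  let X : ℝ → ℝ → ℝ × ℝ × ℝ := fun q => φ (G z0 + m, G z0 + q, z0)
  let v : ℝ → ℝ → ℝ := fun q t => (X q t).2.1 - G (X q t).2.2
  let u : ℝ → ℝ → ℝ := fun q t => (X q t).1 - G (X q t).2.2
  let z : ℝ → ℝ → ℝ := fun q t => (X q t).2.2
  let Uc : ℝ → ℝ → ℝ := fun q t => Real.sigmoid (min (u q t) m)
  have hD := fun q t => uv_deriv (l := l) (S := S) hG hR0 (x := X q) (t := t) (Uc := Uc q t)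
    (by rw [← hclamp]; exact hφ _ t)
  have hX0 : ∀ q, X q 0 = (G z0 + m, G z0 + q, z0) := fun q => hφ0 _
  have hv0 : ∀ q, v q 0 = q := fun q => by simp only [v, hX0]; ring
  have hu0 : ∀ q, u q 0 = m := fun q => by simp only [u, hX0]; ring
  have hzz : ∀ q, z q 0 = z0 := fun q => by simp only [z, hX0]
  have hUc0 : ∀ q t, 0 < Uc q t := fun q t => Real.sigmoid_pos _
  have hUcτ : ∀ q t, Uc q t ≤ τ := fun q t => by
    rw [← hm]; exact Real.sigmoid_le (min_le_right _ _)
  have hz_le : ∀ q t, 0 ≤ t → z q t ≤ z0 := by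
    intro q t ht
    have := lin_decay (w := z q) (T := 0) (c := 0) (fun t => (hD q t).2.2) (fun t _ => by
      rw [neg_zero, neg_nonpos]
      have h1 := hUc0 q t
      have h2 := hUcτ q t
      have h3 := hS0 (X q t).2.2
      refine mul_nonneg (hR0 _).le (mul_nonneg ?_ (Real.sigmoid_nonneg _))
      nlinarith) ht
    rw [hzz] at this
    linarith
  have hsmall : ∀ q t, 0 ≤ t → S (X q t).2.2 ≤ τ ∧ |P (X q t).2.2 - s| ≤ τ := fun q t ht =>
    (hz0 _ (hz_le q t ht)).1
  have hestv := fun q t (ht : 0 ≤ t) => est_v (s := s) (κ := κ) (τ := τ) (u := Uc q t)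
    (v := Real.sigmoid ((X q t).2.1 - G (X q t).2.2)) (σ := S (X q t).2.2) (p := P (X q t).2.2)
    hs (by linarith) hκ0 hτ1 (by linarith) (hUc0 q t).le (hUcτ q t) (Real.sigmoid_nonneg _)
    (Real.sigmoid_le_one _) (hS0 _).le (hsmall q t ht).1 (hsmall q t ht).2
  have hup := fun q t (ht : 0 ≤ t) (h : vp ≤ v q t) =>
    (half_pos hκ0).trans_le ((hestv q t ht).1 (by
      rw [← hV0def, ← hvp]; exact Real.sigmoid_le h))
  have hdn := fun q t (ht : 0 ≤ t) (h : v q t ≤ vm) =>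
    ((hestv q t ht).2 (by
      rw [← hV0def, ← hvm]; exact Real.sigmoid_le h)).trans_lt (neg_lt_zero.2 (half_pos hκ0))
  -- shooting
  have hcont : ∀ t, 0 ≤ t → Continuous (fun q => v q t) := by
    intro t ht
    have h1 : Continuous (fun q => X q t) :=
      (ode_cont lfc bfc hφ0 hφ ht).comp (by fun_prop)
    have := cG.continuous
    fun_prop
  obtain ⟨q, hq⟩ : ∃ q, ∀ t, 0 ≤ t → vm ≤ v q t ∧ v q t ≤ vp := by
    by_contra hcon
    push Not at hcon
    let A : Set ℝ := ⋃ t : Ici (0:ℝ), {q | vp < v q t}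
    let B : Set ℝ := ⋃ t : Ici (0:ℝ), {q | v q t < vm}
    have hA : IsOpen A := isOpen_iUnion fun t => isOpen_lt continuous_const (hcont t t.2)
    have hB : IsOpen B := isOpen_iUnion fun t => isOpen_lt (hcont t t.2) continuous_const
    have hAB : (univ : Set ℝ) ⊆ A ∪ B := by
      intro q _
      obtain ⟨t, ht, h⟩ := hcon q
      by_cases h1 : vm ≤ v q t
      · exact Or.inl (mem_iUnion.2 ⟨⟨t, ht⟩, h h1⟩)
      · exact Or.inr (mem_iUnion.2 ⟨⟨t, ht⟩, not_le.1 h1⟩)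
    have hAn : (univ ∩ A).Nonempty :=
      ⟨vp + 1, trivial, mem_iUnion.2 ⟨⟨0, self_mem_Ici⟩, by
        show vp < v (vp + 1) 0
        rw [hv0]; linarith⟩⟩
    have hBn : (univ ∩ B).Nonempty :=
      ⟨vm - 1, trivial, mem_iUnion.2 ⟨⟨0, self_mem_Ici⟩, by
        show v (vm - 1) 0 < vm
        rw [hv0]; linarith⟩⟩
    obtain ⟨q, -, hqA, hqB⟩ := isPreconnected_univ A B hA hB hAB hAn hBn
    obtain ⟨⟨t1, ht1⟩, h1⟩ := mem_iUnion.1 hqA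
    obtain ⟨⟨t2, ht2⟩, h2⟩ := mem_iUnion.1 hqB
    have h3 := barrier_up (w := v q) (T := 0) (fun t => (hD q t).2.1) (hup q) ht1 (le_of_lt h1)
      (le_max_left t1 t2)
    have h4 := barrier_down (w := v q) (T := 0) (fun t => (hD q t).2.1) (hdn q) ht2 (le_of_lt h2)
      (le_max_right t1 t2)
    linarith
  have hVlo : ∀ t, 0 ≤ t → V0 - κ ≤ Real.sigmoid (v q t) := fun t ht => by
    rw [← hvm]; exact Real.sigmoid_le (hq t ht).1
  have hu : ∀ t, 0 ≤ t → u q t ≤ m - c * t := by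
    intro t ht
    have := lin_decay (w := u q) (T := 0) (c := c) (fun t => (hD q t).1) (fun t ht =>
      est_u hl hs hs1 hc hκ1 hκ0 hτ2 (by linarith) (hUc0 q t).le (hUcτ q t)
        (Real.sigmoid_nonneg _) (Real.sigmoid_le_one _) (hS0 _).le (hsmall q t ht).1
        (hsmall q t ht).2 (hVlo t ht)) ht
    rw [hu0] at this
    linarith
  have hz : ∀ t, 0 ≤ t → z q t ≤ z0 - (k * (1 / 2 * (V0 / 2))) * t := by
    intro t ht
    have := lin_decay (w := z q) (T := 0) (c := k * (1 / 2 * (V0 / 2))) (fun t => (hD q t).2.2)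
      (fun t ht => by
        rw [neg_le_neg_iff]
        have h1 := hUc0 q t
        have h2 := hUcτ q t
        have h3 := hS0 (X q t).2.2
        have h4 := hVlo t ht
        have h5 := (hz0 _ (hz_le q t ht)).2
        have h6 : 0 < S (X q t).2.2 * Uc q t := mul_pos h3 h1
        refine mul_le_mul h5 (mul_le_mul ?_ (le_trans ?_ h4) (by positivity) ?_)
          (by positivity) (hR0 _).le <;> linarith) ht
    rw [hzz] at this
    linarith
  -- true solution
  obtain ⟨y, hy0, hy⟩ := ode_exists lf bf (X q 0)
  have hXy : ∀ t, 0 ≤ t → X q t = y t := by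
    intro t ht
    refine ode_uniq_right lf (fun t ht => ?_) hy hy0.symm ht
    have h1 := hφ (G z0 + m, G z0 + q, z0) t
    have h2 : clampf G m (X q t) = X q t := by
      have h3 := hu t ht
      have h4 : 0 ≤ c * t := by positivity
      simp only [u] at h3
      have h5 : min (X q t).1 (G (X q t).2.2 + m) = (X q t).1 := min_eq_left (by linarith)
      simp only [clampf, h5]
    have h6 : (fld l S G R ∘ clampf G m) (X q t) = fld l S G R (X q t) := by
      simp only [Function.comp, h2]
    rw [← h6]
    exact h1
  have evy : ∀ᶠ t in atTop, X q t = y t := by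
    filter_upwards [eventually_ge_atTop 0] with t ht using hXy t ht
  have limu : Tendsto (fun t => u q t) atTop atBot := by
    have : Tendsto (fun t : ℝ => m - c * t) atTop atBot :=
      tendsto_atBot_add_const_left atTop m (tendsto_neg_atTop_atBot.comp
        (tendsto_id.const_mul_atTop hc0))
    refine tendsto_atBot_mono' atTop ?_ this
    filter_upwards [eventually_ge_atTop 0] with t ht using hu t ht
  have limz : Tendsto (fun t => z q t) atTop atBot := by
    have : Tendsto (fun t : ℝ => z0 - (k * (1 / 2 * (V0 / 2))) * t) atTop atBot :=
      tendsto_atBot_add_const_left atTop z0 (tendsto_neg_atTop_atBot.comp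
        (tendsto_id.const_mul_atTop (by positivity)))
    refine tendsto_atBot_mono' atTop ?_ this
    filter_upwards [eventually_ge_atTop 0] with t ht using hz t ht
  have limU := Real.tendsto_sigmoid_atBot.comp limu
  have limUc : Tendsto (fun t => Uc q t) atTop (nhds 0) := by
    refine Real.tendsto_sigmoid_atBot.comp (tendsto_atBot_mono (fun t => min_le_left _ _) limu)
  have limV : Tendsto (fun t => Real.sigmoid (v q t)) atTop (nhds V0) := by
    rw [Metric.tendsto_nhds]
    intro e he
    obtain ⟨κ', h1, h2, h3, h4⟩ : ∃ κ', 0 < κ' ∧ κ' < e ∧ κ' < V0 ∧ κ' < 1 - V0 := by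
      refine ⟨min e (min V0 (1 - V0)) / 2, ?_⟩
      have a1 := min_le_left e (min V0 (1 - V0))
      have a2 := (min_le_right e (min V0 (1 - V0))).trans (min_le_left _ _)
      have a3 := (min_le_right e (min V0 (1 - V0))).trans (min_le_right _ _)
      have a4 : 0 < min e (min V0 (1 - V0)) := lt_min he (lt_min hV0 (by linarith))
      refine ⟨?_, ?_, ?_, ?_⟩ <;> linarith
    have hτ' : 0 < κ' / 40 := by positivity
    obtain ⟨wp, hwp⟩ : ∃ m, Real.sigmoid m = V0 + κ' := by
      have : V0 + κ' ∈ range Real.sigmoid := by rw [Real.range_sigmoid]; constructor <;> linarith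
      exact this
    obtain ⟨wm, hwm⟩ : ∃ m, Real.sigmoid m = V0 - κ' := by
      have : V0 - κ' ∈ range Real.sigmoid := by rw [Real.range_sigmoid]; constructor <;> linarith
      exact this
    obtain ⟨T, hT⟩ := eventually_atTop.1 ((limz.eventually (hsm _ hτ')).and
      ((limUc.eventually_lt_const hτ').and (eventually_ge_atTop 0)))
    have hest := fun t (ht : T ≤ t) => est_v (s := s) (κ := κ') (τ := κ' / 40) (u := Uc q t)
      (v := Real.sigmoid ((X q t).2.1 - G (X q t).2.2)) (σ := S (X q t).2.2)
      (p := P (X q t).2.2) hs (by linarith) h1 (by linarith) (by linarith) (hUc0 q t).le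
      (hT t ht).2.1.le (Real.sigmoid_nonneg _)
      (Real.sigmoid_le_one _) (hS0 _).le (hT t ht).1.1 (hT t ht).1.2
    filter_upwards [eventually_ge_atTop T] with t ht
    have b1 : v q t ≤ wp := escape_up (w := v q) (T := T) (B := vp) (fun t => (hD q t).2.1)
      (half_pos h1) (fun t ht h => (hest t ht).1 (by
        rw [← hV0def, ← hwp]; exact Real.sigmoid_le h)) (fun t ht => (hq t (hT t ht).2.2).2) ht
    have b2 : wm ≤ v q t := escape_down (w := v q) (T := T) (B := vm) (fun t => (hD q t).2.1)
      (half_pos h1) (fun t ht h => (hest t ht).2 (by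
        rw [← hV0def, ← hwm]; exact Real.sigmoid_le h)) (fun t ht => (hq t (hT t ht).2.2).1) ht
    have b3 := Real.sigmoid_le b1
    have b4 := Real.sigmoid_le b2
    rw [hwp] at b3
    rw [hwm] at b4
    rw [Real.dist_eq, abs_lt]
    constructor <;> linarith
  refine ⟨y, hy, limU.congr' ?_, limV.congr' ?_, limz.congr' ?_⟩
  · filter_upwards [evy] with t ht
    simp only [Function.comp, u, ht]
  · filter_upwards [evy] with t ht
    simp only [v, ht]
  · filter_upwards [evy] with t ht
    simp only [z, ht]

lemma bigO_aux {g : ℝ → ℝ} {δ : ℝ} (hδ : 0 < δ) (hg : ContDiffOn ℝ 1 g (Ico 0 δ)) :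
    ∃ C > 0, ∀ᶠ x in nhdsWithin 0 (Ico 0 δ), |g x - g 0| ≤ C * |x| := by
  have hd : DifferentiableWithinAt ℝ g (Ico 0 δ) 0 :=
    (hg.differentiableOn one_ne_zero) 0 ⟨le_rfl, hδ⟩
  have := hd.hasDerivWithinAt.isBigO_sub
  obtain ⟨C, hC, h⟩ := this.exists_pos
  refine ⟨C, hC, ?_⟩
  have h2 := h.bound
  rw [Filter.prod_pure, eventually_map] at h2
  filter_upwards [h2] with x hx
  simpa using hx

lemma fwd_est (l s Flo : ℝ) (hs : 0 < s) (hFlo : 0 < Flo) (u v σ p o q C : ℝ) (hC : 0 < C)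
    (A : ℝ) (hA : A = (1 - s) / s) (D : ℝ) (hD : D = 3 + 7 * |A|) (c : ℝ)
    (hc : c = 1 / 2 * Flo * (1 / 2 * (1 / (2 * (1 + s)))))
    (u0 : 0 < u) (u1 : u < 1) (v0 : 0 < v) (v1 : v < 1) (s0 : 0 < σ) (o0 : 0 < o) (f0 : Flo ≤ q)
    (h1 : o < 1 / 2) (h2 : u < 1 / 2) (h3 : 1 / (2 * (1 + s)) < v) (h4 : σ < 1)
    (h5 : 0 ≤ (4 + 2 * l - 1 / s) * (1 - u) + u * ((1 - 2 * s) / s))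
    (h6 : σ ≤ C * o) (h7 : |p - s| ≤ C * o) :
    0 ≤ ((3 + 2 * l - (4 + 2 * l) * u) * (1 - v) - (1 + σ - p) * ((1 - u + σ * u) * v)
        + A * ((2 * u - 1) * (1 - v + 2 * σ * v) + p * ((1 - u + σ * u) * v)))
        - D * C / c * (-(o * (1 - o) * q * ((1 - u + σ * u) * v))) := by
  have hcpos : 0 < c := by rw [hc]; positivity
  have hDpos : 0 < D := by rw [hD]; positivity
  obtain ⟨H, hH⟩ : ∃ H, H = (1 - u + σ * u) * v := ⟨_, rfl⟩
  rw [← hH]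
  have hH0 : 1 / 2 * (1 / (2 * (1 + s))) ≤ H := by
    rw [hH]
    apply mul_le_mul _ h3.le (by positivity) _
    · nlinarith
    · nlinarith
  have hHn : 0 < H := lt_of_lt_of_le (by positivity) hH0
  have hH1 : H ≤ 1 := by
    rw [hH]
    have : 1 - u + σ * u ≤ 1 := by nlinarith
    have : 0 ≤ 1 - u + σ * u := by nlinarith
    nlinarith
  have hdec : c * o ≤ o * (1 - o) * q * H := by
    have h8 : c ≤ (1 - o) * q * H := by
      rw [hc]
      have hq : 0 < q := hFlo.trans_le f0
      have ho1 : 0 < 1 - o := by linarith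
      apply mul_le_mul _ hH0 (by positivity) (by positivity)
      apply mul_le_mul _ f0 hFlo.le (by linarith)
      linarith
    have := mul_le_mul_of_nonneg_left h8 o0.le
    linarith
  have hid : (3 + 2 * l - (4 + 2 * l) * u) * (1 - v) - (1 + σ - p) * H
      + A * ((2 * u - 1) * (1 - v + 2 * σ * v) + p * H)
      = ((4 + 2 * l - 1 / s) * (1 - u) + u * ((1 - 2 * s) / s)) * (1 - v)
        + (-(σ * H) + (p - s) * H + A * ((2 * u - 1) * (2 * σ * v) + (p - s) * H)) := by
    rw [hA, hH]; field_simp; ring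
  have hmain : 0 ≤ ((4 + 2 * l - 1 / s) * (1 - u) + u * ((1 - 2 * s) / s)) * (1 - v) :=
    mul_nonneg h5 (by linarith)
  have b1 : σ * H ≤ C * o := (mul_le_of_le_one_right s0.le hH1).trans h6
  have b2 : |(p - s) * H| ≤ C * o := by
    rw [abs_mul, abs_of_pos hHn]
    exact (mul_le_of_le_one_right (abs_nonneg _) hH1).trans h7
  have b3 : |(2 * u - 1) * (2 * σ * v)| ≤ 2 * (C * o) := by
    rw [abs_mul]
    have x1 : |2 * u - 1| ≤ 1 := by rw [abs_le]; constructor <;> linarith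
    have x2 : |2 * σ * v| ≤ 2 * (C * o) := by
      rw [abs_of_nonneg (by positivity)]
      have := mul_le_of_le_one_right s0.le v1.le
      linarith
    calc _ ≤ 1 * (2 * (C * o)) := mul_le_mul x1 x2 (abs_nonneg _) (by norm_num)
      _ = _ := one_mul _
  have b4 : |A * ((2 * u - 1) * (2 * σ * v) + (p - s) * H)| ≤ |A| * (3 * (C * o)) := by
    rw [abs_mul]
    apply mul_le_mul_of_nonneg_left _ (abs_nonneg _)
    linarith [abs_add_le ((2 * u - 1) * (2 * σ * v)) ((p - s) * H)]
  have hco : 0 < C * o := by positivity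
  have b5 : -(D * (C * o)) ≤ -(σ * H) + (p - s) * H
      + A * ((2 * u - 1) * (2 * σ * v) + (p - s) * H) := by
    have := neg_abs_le (A * ((2 * u - 1) * (2 * σ * v) + (p - s) * H))
    have := neg_abs_le ((p - s) * H)
    rw [hD]
    have := mul_nonneg (abs_nonneg A) hco.le
    linarith [abs_nonneg ((p - s) * H)]
  have b6 : D * (C * o) ≤ D * C / c * (o * (1 - o) * q * H) := by
    calc D * (C * o) = D * C / c * (c * o) := by field_simp
      _ ≤ _ := mul_le_mul_of_nonneg_left hdec (by positivity)
  rw [hid]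
  linarith

lemma fwd_aux (l s Flo : ℝ) (hl : -1 < l) (hs : 0 < s) (hFlo : 0 < Flo)
    (hge : 1 / (4 + 2 * l) ≤ s) (U V S P Fq Ω : ℝ → ℝ) 
    (hU : ∀ t : ℝ, U t ∈ Ioo (0:ℝ) 1) (hV : ∀ t : ℝ, V t ∈ Ioo (0:ℝ) 1)
    (hΩ : ∀ t : ℝ, 0 < Ω t) (hF : ∀ t, Flo ≤ Fq t)
    (hS : ∀ t, 0 < S t) 
    (dU : ∀ t : ℝ, HasDerivAt U
        (U t * (1 - U t) * ((3 + 2 * l - (4 + 2 * l) * U t) * (1 - V t)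
          - (1 + S t - P t) * ((1 - U t + S t * U t) * V t))) t) 
    (dV : ∀ t : ℝ, HasDerivAt V
        (V t * (1 - V t) * ((2 * U t - 1) * (1 - V t + 2 * S t * V t)
          + P t * ((1 - U t + S t * U t) * V t))) t)
    (dΩ : ∀ t : ℝ, HasDerivAt Ω
        (-(Ω t * (1 - Ω t) * Fq t * ((1 - U t + S t * U t) * V t))) t)
    (lU : Tendsto U atTop (nhds 0)) (lV : Tendsto V atTop (nhds (1 / (1 + s))))
    (lΩ : Tendsto Ω atTop (nhds 0)) (C : ℝ) (hC : 0 < C)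
    (bS : ∀ᶠ t in atTop, S t ≤ C * Ω t) (bP : ∀ᶠ t in atTop, |P t - s| ≤ C * Ω t) : False := by
  set A : ℝ := (1 - s) / s with hA
  have hl4 : 0 < 4 + 2 * l := by linarith
  let L : ℝ → ℝ := fun t => Real.log (U t) - Real.log (1 - U t)
    + A * (Real.log (V t) - Real.log (1 - V t))
  have dL : ∀ t, HasDerivAt L (((3 + 2 * l - (4 + 2 * l) * U t) * (1 - V t)
          - (1 + S t - P t) * ((1 - U t + S t * U t) * V t)) 
          + A * ((2 * U t - 1) * (1 - V t + 2 * S t * V t)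
          + P t * ((1 - U t + S t * U t) * V t))) t := by
    intro t
    have u0 : U t ≠ 0 := (hU t).1.ne'
    have u1 : 1 - U t ≠ 0 := (sub_pos.2 (hU t).2).ne'
    have v0 : V t ≠ 0 := (hV t).1.ne'
    have v1 : 1 - V t ≠ 0 := (sub_pos.2 (hV t).2).ne'
    have h := (((dU t).log u0).sub (((dU t).const_sub 1).log u1)).add
      ((((dV t).log v0).sub (((dV t).const_sub 1).log v1)).const_mul A)
    refine h.congr_deriv ?_
    generalize ((3 + 2 * l - (4 + 2 * l) * U t) * (1 - V t)
          - (1 + S t - P t) * ((1 - U t + S t * U t) * V t)) = X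
    generalize ((2 * U t - 1) * (1 - V t + 2 * S t * V t)
          + P t * ((1 - U t + S t * U t) * V t)) = Y
    field_simp
    ring
  -- positivity of the main term
  have hG : ∀ᶠ t in atTop, 0 ≤ (4 + 2 * l - 1 / s) * (1 - U t) + U t * ((1 - 2 * s) / s) := by
    rcases hge.eq_or_lt with h | h
    · have h1 : s * (4 + 2 * l) = 1 := by rw [← h]; field_simp
      have h2 : 4 + 2 * l - 1 / s = 0 := by field_simp; linarith
      have h3 : 0 ≤ (1 - 2 * s) / s := by
        apply div_nonneg _ hs.le
        nlinarith
      refine Eventually.of_forall fun t => ?_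
      rw [h2, zero_mul, zero_add]
      exact mul_nonneg (hU t).1.le h3
    · have h2 : 0 < 4 + 2 * l - 1 / s := by
        rw [sub_pos, div_lt_iff₀ hs]
        rw [div_lt_iff₀ hl4] at h
        linarith
      have : Tendsto (fun t => (4 + 2 * l - 1 / s) * (1 - U t) + U t * ((1 - 2 * s) / s)) atTop
          (nhds ((4 + 2 * l - 1 / s) * (1 - 0) + 0 * ((1 - 2 * s) / s))) :=
        ((lU.const_sub 1).const_mul _).add (lU.mul_const _)
      filter_upwards [this.eventually_const_lt (u := 0) (by simpa using h2)] with t ht using ht.le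
  set D : ℝ := 3 + 7 * |A| with hD
  set c : ℝ := 1 / 2 * Flo * (1 / 2 * (1 / (2 * (1 + s)))) with hc
  have hcpos : 0 < c := by positivity
  have hDpos : 0 < D := by positivity
  let Mf : ℝ → ℝ := fun t => L t - (D * C / c) * Ω t
  have hlim : Tendsto Mf atTop atBot := by
    have l1 : Tendsto (fun t => Real.log (U t)) atTop atBot := by
      refine Real.tendsto_log_nhdsGT_zero.comp ?_
      exact tendsto_nhdsWithin_iff.2 ⟨lU, Eventually.of_forall fun t => (hU t).1⟩
    have hp : (0:ℝ) < 1 / (1 + s) := by positivity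
    have hp1 : 1 / (1 + s) < 1 := by rw [div_lt_one (by positivity)]; linarith
    have l2 : Tendsto (fun t => -Real.log (1 - U t)
      + A * (Real.log (V t) - Real.log (1 - V t)) - (D * C / c) * Ω t) atTop
      (nhds (-Real.log (1 - 0) + A * (Real.log (1 / (1 + s)) - Real.log (1 - 1 / (1 + s)))
        - (D * C / c) * 0)) := by
      refine (((lU.const_sub 1).log (by norm_num)).neg.add
        (((lV.log hp.ne').sub ((lV.const_sub 1).log (by linarith))).const_mul A)).sub
        (lΩ.const_mul _)
    have := l1.atBot_add l2
    refine this.congr fun t => ?_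
    simp only [Mf, L]; ring
  have dM : ∀ t, HasDerivAt Mf _ t := fun t => (dL t).sub ((dΩ t).const_mul (D * C / c))
  have hpos : ∀ᶠ t in atTop, 0 ≤ deriv Mf t := by
    have e1 := lΩ.eventually_lt_const (u := 1/2) (by norm_num)
    have e2 := lU.eventually_lt_const (u := 1/2) (by norm_num)
    have e3 := lV.eventually_const_lt (u := 1 / (2 * (1 + s)))
      (by apply one_div_lt_one_div_of_lt <;> linarith)
    have e4 : ∀ᶠ t in atTop, S t < 1 := by
      have := (lΩ.const_mul C).eventually_lt_const (u := 1) (by simp)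
      filter_upwards [this, bS] with t h1 h2 using h2.trans_lt h1
    filter_upwards [e1, e2, e3, e4, hG, bS, bP] with t h1 h2 h3 h4 h5 h6 h7
    rw [(dM t).deriv]
    obtain ⟨u0, u1⟩ := hU t
    obtain ⟨v0, v1⟩ := hV t
    have s0 := hS t
    have o0 := hΩ t
    have f0 := hF t
    have := fwd_est l s Flo hs hFlo (U t) (V t) (S t) (P t) (Ω t) (Fq t) C hC A hA D hD c hc
      u0 u1 v0 v1 s0 o0 f0 h1 h2 h3 h4 h5 h6 h7
    linarith
  obtain ⟨T, hT⟩ := eventually_atTop.1 hpos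
  have hmono : MonotoneOn Mf (Ici T) := by
    refine monotoneOn_of_deriv_nonneg (convex_Ici T)
      (fun t _ => (dM t).continuousAt.continuousWithinAt)
      (fun t _ => (dM t).differentiableAt.differentiableWithinAt) ?_
    intro t ht
    rw [interior_Ici] at ht
    exact hT t (le_of_lt ht)
  obtain ⟨t, h1, h2⟩ := ((hlim.eventually_lt_atBot (Mf T)).and (eventually_ge_atTop T)).exists
  exact absurd (hmono self_mem_Ici h2 h2) (not_le.2 h1)

lemma sig_bounds {σ σ' : ℝ → ℝ} (hσderiv : ∀ η : ℝ, 0 < η → HasDerivAt σ (σ' η) η)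
    (hσ0 : Tendsto σ (nhdsWithin 0 (Ioi 0)) (nhds 0)) {k₁ k₂ η₀ : ℝ}
    (h : ∀ η ∈ Ioo (0:ℝ) η₀, σ' η ∈ Ioo k₁ k₂) {η : ℝ} (hη : η ∈ Ioo (0:ℝ) η₀) :
    k₁ * η ≤ σ η ∧ σ η ≤ k₂ * η := by
  have ev : ∀ᶠ e in nhdsWithin (0:ℝ) (Ioi 0), k₁ * (η - e) ≤ σ η - σ e ∧
      σ η - σ e ≤ k₂ * (η - e) := by
    filter_upwards [Ioo_mem_nhdsGT hη.1] with e he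
    obtain ⟨c, hc, hc2⟩ := exists_hasDerivAt_eq_slope σ σ' he.2
      (fun x hx => (hσderiv x (he.1.trans_le hx.1)).continuousAt.continuousWithinAt)
      (fun x hx => hσderiv x (he.1.trans hx.1))
    have h1 := h c ⟨he.1.trans hc.1, hc.2.trans hη.2⟩
    have h2 : 0 < η - e := sub_pos.2 he.2
    rw [eq_div_iff h2.ne'] at hc2
    rw [← hc2]
    exact ⟨mul_le_mul_of_nonneg_right h1.1.le h2.le, mul_le_mul_of_nonneg_right h1.2.le h2.le⟩
  have hid : Tendsto (fun e : ℝ => e) (nhdsWithin (0:ℝ) (Ioi 0)) (nhds 0) :=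
    tendsto_id.mono_left nhdsWithin_le_nhds
  have l0 : Tendsto (fun e => σ η - σ e) (nhdsWithin (0:ℝ) (Ioi 0)) (nhds (σ η)) := by
    simpa using hσ0.const_sub (σ η)
  have l1 : ∀ k : ℝ, Tendsto (fun e => k * (η - e)) (nhdsWithin (0:ℝ) (Ioi 0)) (nhds (k * η)) := by
    intro k
    simpa using (hid.const_sub η).const_mul k
  exact ⟨le_of_tendsto_of_tendsto (l1 _) l0 (ev.mono fun _ h => h.1),
    le_of_tendsto_of_tendsto l0 (l1 _) (ev.mono fun _ h => h.2)⟩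

/-- If `σ`, `σ'`, `F` extend (as functions of `Ω`) to `C¹` functions on `[0,δ)` with `σ(0) = 0`, `σ'(0) = σ'₀ ∈ (0,2)`, `F(0) = F₀ > 0`, then the fixed point `B₁ = (0, 1/(1+σ'₀), 0)` attracts some interior orbit if and only if `σ'₀ < 1/(4+2l)`. -/
theorem stmt16
    (l : ℝ) (hl : -1 < l)
    (σ σ' : ℝ → ℝ)
    (hσderiv : ∀ η : ℝ, 0 < η → HasDerivAt σ (σ' η) η)
    (hσ'cont : ContinuousOn σ' (Ioi 0))
    (hσrange : ∀ η : ℝ, 0 < η → σ η ∈ Ioo 0 (1 / (3 + 2 * l)))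
    (hσ0 : Tendsto σ (nhdsWithin 0 (Ioi 0)) (nhds 0))
    (k₁ k₂ : ℝ) (hk₁ : 0 < k₁) (hk₁₂ : k₁ < k₂)
    (hσ'near : ∃ η₀ > (0:ℝ), ∀ η ∈ Ioo (0:ℝ) η₀, σ' η ∈ Ioo k₁ k₂)
    (ω ω' : ℝ → ℝ)
    (hωsmooth : ContDiffOn ℝ (⊤ : ℕ∞) ω (Ioi 0))
    (hωderiv : ∀ η : ℝ, 0 < η → HasDerivAt ω (ω' η) η)
    (hωpos : ∀ η : ℝ, 0 < η → 0 < ω η)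
    (hωmono : StrictMonoOn ω (Ioi 0))
    (hω0 : Tendsto ω (nhdsWithin 0 (Ioi 0)) (nhds 0))
    (F : ℝ → ℝ) (hFdef : ∀ η : ℝ, 0 < η → F η = σ η * (ω' η / ω η))
    (Flo Fhi : ℝ) (hFlo : 0 < Flo)
    (hFbounds : ∀ η : ℝ, 0 < η → F η ∈ Icc Flo Fhi)
    (δ σ'₀ F₀ : ℝ) (hδ : 0 < δ) (hσ'₀pos : 0 < σ'₀) (hσ'₀lt : σ'₀ < 2) (hF₀ : 0 < F₀)
    (σe σ'e Fe : ℝ → ℝ)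
    (hσeC1 : ContDiffOn ℝ 1 σe (Ico 0 δ))
    (hσ'eC1 : ContDiffOn ℝ 1 σ'e (Ico 0 δ))
    (hFeC1 : ContDiffOn ℝ 1 Fe (Ico 0 δ))
    (hσe0 : σe 0 = 0) (hσ'e0 : σ'e 0 = σ'₀) (hFe0 : Fe 0 = F₀)
    (hcompat : ∀ η : ℝ, 0 < η → ω η / (1 + ω η) < δ →
      σe (ω η / (1 + ω η)) = σ η ∧ σ'e (ω η / (1 + ω η)) = σ' η ∧
        Fe (ω η / (1 + ω η)) = F η) :
    (∃ U V E Ω : ℝ → ℝ,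
      (∀ t : ℝ, Ω t = ω (E t) / (1 + ω (E t))) ∧
      (∀ t : ℝ, U t ∈ Ioo (0:ℝ) 1) ∧ (∀ t : ℝ, V t ∈ Ioo (0:ℝ) 1) ∧
      (∀ t : ℝ, 0 < E t) ∧ Continuous E ∧
      (∀ t : ℝ, HasDerivAt U
        (U t * (1 - U t) * ((3 + 2 * l - (4 + 2 * l) * U t) * (1 - V t)
          - (1 + σ (E t) - σ' (E t)) * ((1 - U t + σ (E t) * U t) * V t))) t) ∧
      (∀ t : ℝ, HasDerivAt V
        (V t * (1 - V t) * ((2 * U t - 1) * (1 - V t + 2 * σ (E t) * V t)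
          + σ' (E t) * ((1 - U t + σ (E t) * U t) * V t))) t) ∧
      (∀ t : ℝ, HasDerivAt Ω
        (-(Ω t * (1 - Ω t) * F (E t) * ((1 - U t + σ (E t) * U t) * V t))) t) ∧
      Tendsto (fun t => (U t, V t, Ω t)) atTop
        (nhds ((0:ℝ), 1 / (1 + σ'₀), (0:ℝ)))) ↔ σ'₀ < 1 / (4 + 2 * l) := by
  have hΩb : ∀ η : ℝ, 0 < η → 0 < ω η / (1 + ω η) := fun η h => by
    have := hωpos η h
    positivity
  constructor
  · rintro ⟨U, V, E, Ω, hΩE, hU, hV, hE, -, dU, dV, dΩ, lim⟩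
    by_contra hcon
    rw [not_lt] at hcon
    have lU : Tendsto U atTop (nhds 0) := (continuous_fst.tendsto _).comp lim
    have lV : Tendsto V atTop (nhds (1 / (1 + σ'₀))) :=
      ((continuous_fst.comp continuous_snd).tendsto _).comp lim
    have lΩ : Tendsto Ω atTop (nhds 0) :=
      ((continuous_snd.comp continuous_snd).tendsto _).comp lim
    have hΩ : ∀ t, 0 < Ω t := fun t => by rw [hΩE]; exact hΩb _ (hE t)
    have evδ : ∀ᶠ t in atTop, Ω t < δ := lΩ.eventually_lt_const hδ
    have lΩ2 : Tendsto Ω atTop (nhdsWithin 0 (Ico 0 δ)) :=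
      tendsto_nhdsWithin_iff.2 ⟨lΩ, evδ.mono fun t ht => ⟨(hΩ t).le, ht⟩⟩
    obtain ⟨C1, hC1, b1⟩ := bigO_aux hδ hσeC1
    obtain ⟨C2, hC2, b2⟩ := bigO_aux hδ hσ'eC1
    refine fwd_aux l σ'₀ Flo hl hσ'₀pos hFlo hcon U V (fun t => σ (E t)) (fun t => σ' (E t))
      (fun t => F (E t)) Ω hU hV hΩ (fun t => (hFbounds _ (hE t)).1)
      (fun t => (hσrange _ (hE t)).1) dU dV dΩ lU lV lΩ (C1 + C2) (by positivity) ?_ ?_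
    · filter_upwards [evδ, lΩ2.eventually b1] with t h1 h2
      rw [hΩE] at h1
      have h3 := (hcompat _ (hE t) h1).1
      rw [← hΩE] at h3
      rw [h3, hσe0, sub_zero, abs_of_pos (hΩ t)] at h2
      have := le_abs_self (σ (E t))
      nlinarith [mul_pos hC2 (hΩ t)]
    · filter_upwards [evδ, lΩ2.eventually b2] with t h1 h2
      rw [hΩE] at h1
      have h3 := (hcompat _ (hE t) h1).2.1
      rw [← hΩE] at h3
      rw [h3, hσ'e0, abs_of_pos (hΩ t)] at h2
      nlinarith [mul_pos hC1 (hΩ t)]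
  · intro hs4
    obtain ⟨η₀, hη₀, hnear⟩ := hσ'near
    have hl3 : 0 < 3 + 2 * l := by linarith
    have e0 : ∀ z : ℝ, 0 < Real.exp z := Real.exp_pos
    have hexp : Tendsto Real.exp atBot (nhdsWithin 0 (Ioi 0)) :=
      tendsto_nhdsWithin_iff.2 ⟨Real.tendsto_exp_atBot, Eventually.of_forall e0⟩
    have hSpos : ∀ z, 0 < σ (Real.exp z) := fun z => (hσrange _ (e0 z)).1
    have dS : ∀ z, HasDerivAt (fun z => σ (Real.exp z)) (σ' (Real.exp z) * Real.exp z) z :=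
      fun z => (hσderiv _ (e0 z)).comp z (Real.hasDerivAt_exp z)
    have cS : ContDiff ℝ 1 (fun z => σ (Real.exp z)) := by
      rw [contDiff_one_iff_deriv]
      refine ⟨fun z => (dS z).differentiableAt, ?_⟩
      have : deriv (fun z => σ (Real.exp z)) = fun z => σ' (Real.exp z) * Real.exp z :=
        funext fun z => (dS z).deriv
      rw [this]
      exact (hσ'cont.comp_continuous Real.continuous_exp e0).mul Real.continuous_exp
    have cG : ContDiff ℝ 1 (fun z => Real.log (σ (Real.exp z))) :=
      cS.log fun z => (hSpos z).ne'
    have cR : ContDiff ℝ 1 (fun z => σ (Real.exp z) * Real.exp (-z)) :=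
      cS.mul contDiff_neg.exp
    have hG : ∀ z, HasDerivAt (fun z => Real.log (σ (Real.exp z)))
        (σ' (Real.exp z) / (σ (Real.exp z) * Real.exp (-z))) z := by
      intro z
      refine ((dS z).log (hSpos z).ne').congr_deriv ?_
      have := (hSpos z).ne'
      have h2 := (e0 z).ne'
      rw [Real.exp_neg]
      field_simp
    have hS1 : ∀ z, σ (Real.exp z) ≤ 1 := by
      intro z
      refine (hσrange _ (e0 z)).2.le.trans ?_
      rw [div_le_one hl3]
      linarith
    have hR0 : ∀ z, 0 < σ (Real.exp z) * Real.exp (-z) := fun z =>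
      mul_pos (hSpos z) (e0 _)
    have hk₂ : 0 < k₂ := hk₁.trans hk₁₂
    have hR1 : ∀ z, σ (Real.exp z) * Real.exp (-z) ≤ k₂ + 1 / η₀ := by
      intro z
      rw [Real.exp_neg, ← div_eq_mul_inv, div_le_iff₀ (e0 z)]
      have hp : 0 < 1 / η₀ := by positivity
      rcases lt_or_ge (Real.exp z) η₀ with h | h
      · have := (sig_bounds hσderiv hσ0 hnear ⟨e0 z, h⟩).2
        nlinarith [e0 z]
      · have h1 : 1 / η₀ * η₀ ≤ 1 / η₀ * Real.exp z := mul_le_mul_of_nonneg_left h hp.le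
        rw [one_div_mul_cancel hη₀.ne'] at h1
        nlinarith [e0 z, hS1 z, mul_pos hk₂ (e0 z)]
    have hRk : ∀ᶠ z in atBot, k₁ ≤ σ (Real.exp z) * Real.exp (-z) := by
      filter_upwards [Real.tendsto_exp_atBot.eventually_lt_const hη₀] with z hz
      rw [Real.exp_neg, ← div_eq_mul_inv, le_div_iff₀ (e0 z)]
      exact (sig_bounds hσderiv hσ0 hnear ⟨e0 z, hz⟩).1
    have lω : Tendsto (fun η => ω η / (1 + ω η)) (nhdsWithin 0 (Ioi 0)) (nhds 0) := by
      have := hω0.div (hω0.const_add 1) (by norm_num)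
      rw [zero_div] at this
      exact this
    have lω2 : Tendsto (fun η => ω η / (1 + ω η)) (nhdsWithin 0 (Ioi 0))
        (nhdsWithin 0 (Ico 0 δ)) := by
      refine tendsto_nhdsWithin_iff.2 ⟨lω, ?_⟩
      filter_upwards [lω.eventually_lt_const hδ, self_mem_nhdsWithin] with η h1 h2
      exact ⟨(hΩb η h2).le, h1⟩
    have lσ' : Tendsto σ' (nhdsWithin 0 (Ioi 0)) (nhds σ'₀) := by
      have h1 : Tendsto σ'e (nhdsWithin 0 (Ico 0 δ)) (nhds σ'₀) := by
        rw [← hσ'e0]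
        exact hσ'eC1.continuousOn 0 ⟨le_rfl, hδ⟩
      refine (h1.comp lω2).congr' ?_
      filter_upwards [lω.eventually_lt_const hδ, self_mem_nhdsWithin] with η h1 h2
      exact (hcompat η h2 h1).2.1
    obtain ⟨x, hx, limU, limV, limz⟩ := bwd_core hl hσ'₀pos hs4 cS cG cR hG hSpos hS1 hR0 hR1 hk₁
      hRk (hσ0.comp hexp) (lσ'.comp hexp)
    have hD := fun t => uv_deriv (l := l) (S := fun z => σ (Real.exp z))
      (G := fun z => Real.log (σ (Real.exp z))) (R := fun z => σ (Real.exp z) * Real.exp (-z))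
      (P := fun z => σ' (Real.exp z)) hG hR0 (x := x) (t := t)
      (Uc := Real.sigmoid ((x t).1 - Real.log (σ (Real.exp (x t).2.2)))) (hx t)
    have dE : ∀ t, HasDerivAt (fun t => Real.exp (x t).2.2) _ t := fun t => (hD t).2.2.exp
    have lE : Tendsto (fun t => Real.exp (x t).2.2) atTop (nhdsWithin 0 (Ioi 0)) :=
      hexp.comp limz
    refine ⟨fun t => Real.sigmoid ((x t).1 - Real.log (σ (Real.exp (x t).2.2))),
      fun t => Real.sigmoid ((x t).2.1 - Real.log (σ (Real.exp (x t).2.2))),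
      fun t => Real.exp (x t).2.2,
      fun t => ω (Real.exp (x t).2.2) / (1 + ω (Real.exp (x t).2.2)), fun t => rfl,
      fun t => ⟨Real.sigmoid_pos _, Real.sigmoid_lt_one _⟩,
      fun t => ⟨Real.sigmoid_pos _, Real.sigmoid_lt_one _⟩, fun t => e0 _,
      continuous_iff_continuousAt.2 fun t => (dE t).continuousAt, fun t => ?_, fun t => ?_,
      fun t => ?_, limU.prodMk_nhds (limV.prodMk_nhds (lω.comp lE))⟩
    · exact (Real.hasDerivAt_sigmoid _).comp t (hD t).1
    · exact (Real.hasDerivAt_sigmoid _).comp t (hD t).2.1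
    · have h1 := (hωderiv _ (e0 (x t).2.2)).comp t (dE t)
      have hw := hωpos _ (e0 (x t).2.2)
      refine (h1.div (h1.const_add 1) (by simp only [Function.comp]; positivity)).congr_deriv ?_
      simp only [Function.comp]
      rw [hFdef _ (e0 _), Real.exp_neg]
      have h2 := (e0 (x t).2.2).ne'
      have h3 : 1 + ω (Real.exp (x t).2.2) ≠ 0 := by positivity
      have h4 := hw.ne'
      field_simp
      ring
end
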